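/- For every t ≥ 0, every Koszul cycle c ∈ ker(d_t) can be written as c = u + d_{t+1}(w), where w ∈ K_{t+1} and u is a k-linear combination of elements of the form g • (Z_{μ_1} · Z_{μ_2} · ⋯ · Z_{μ_s}) with g ∈ GL_n(k) and 0 ≤ μ_1 < μ_2 < ⋯ < μ_s ≤ n-1 satisfying μ_1 + ⋯ + μ_s = t; that is, as a k[GL_n(k)]-module, the Koszul homology H_*(𝔪²) is generated by the squarefree monomials in Z_0, …, Z_{n-1}. -/

import Mathlib

set_option maxHeartbeats 1000000
set_option synthInstance.maxHeartbeats 400000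

open scoped TensorProduct
open MvPolynomial

noncomputable section

variable (k : Type) [Field k] (n : ℕ)

/-- The polynomial ring `S = k[x_1,…,x_n]`. -/
abbrev S := MvPolynomial (Fin n) k

/-- The space `S_1` of linear forms. -/
abbrev S1 := homogeneousSubmodule (Fin n) k 1

/-- The space `S_2` of quadratic forms. -/
abbrev S2 := homogeneousSubmodule (Fin n) k 2

/-- The ambient algebra `S ⊗ Λ(S_2)` containing all terms `K_t = S ⊗ ⋀^t S_2`
of the Koszul complex `K(𝔪², S)`; the product is `(f ⊗ ω)(g ⊗ η) = fg ⊗ ω∧η`. -/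
abbrev KK := (MvPolynomial (Fin n) k) ⊗[k] ExteriorAlgebra k (S2 k n)

variable {k n}

/-- The product of two linear forms, as an element of `S_2`. -/
def mulW (a b : S1 k n) : S2 k n :=
  ⟨(a : S k n) * (b : S k n), by
    rw [mem_homogeneousSubmodule]
    have ha := (mem_homogeneousSubmodule 1 (a : S k n)).1 a.2
    have hb := (mem_homogeneousSubmodule 1 (b : S k n)).1 b.2
    simpa using ha.mul hb⟩

/-- The variable `x_i`, as an element of `S_1`. -/
def xv (i : Fin n) : S1 k n :=
  ⟨X i, by rw [mem_homogeneousSubmodule]; exact isHomogeneous_X _ _⟩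

/-- The quadratic monomial `x_i x_j`, as an element of `S_2`. -/
def q (i j : Fin n) : S2 k n := mulW (xv i) (xv j)

variable (k n)

/-- `K_t = S ⊗ ⋀^t S_2`, as a subspace of the ambient algebra `KK`. -/
def Kt (t : ℕ) : Submodule k (KK k n) :=
  LinearMap.range (TensorProduct.map (LinearMap.id : S k n →ₗ[k] S k n)
    (Submodule.subtype (⋀[k]^t (S2 k n))))

variable {k n}

/-- The family of Koszul differentials, encoded as linear endomorphisms of the
ambient space `KK`: `D t` restricted to `K_t` is the `t`-th Koszul differential
`d_t : K_t → K_{t-1}`, i.e. `d_0 = 0` and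
`d_t(f ⊗ m_1 ∧ ⋯ ∧ m_t) = Σ_j (-1)^{j-1} (f·m_j) ⊗ m_1 ∧ ⋯ ∧ m̂_j ∧ ⋯ ∧ m_t`. -/
def IsKoszulDiff (D : ℕ → KK k n →ₗ[k] KK k n) : Prop :=
  D 0 = 0 ∧
  ∀ (t : ℕ) (f : S k n) (m : Fin (t+1) → S2 k n),
    D (t+1) (f ⊗ₜ[k] (ExteriorAlgebra.ιMulti k (t+1) m : ExteriorAlgebra k (S2 k n)))
      = ∑ j : Fin (t+1), ((-1:ℤ)^(j:ℕ)) •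
          ((f * ((m j : S k n))) ⊗ₜ[k]
            (ExteriorAlgebra.ιMulti k t (fun l => m (j.succAbove l)) : ExteriorAlgebra k (S2 k n)))

/-- The cycle `z_{a,b} = Σ_{σ ∈ 𝔖_{t+1}} sgn(σ) a_{σ(t+1)} ⊗ (b_1 a_{σ(1)} ∧ ⋯ ∧ b_t a_{σ(t)})`. -/
def zel (t : ℕ) (a : Fin (t+1) → S1 k n) (b : Fin t → S1 k n) : KK k n :=
  ∑ σ : Equiv.Perm (Fin (t+1)),
    ((Equiv.Perm.sign σ : ℤ)) •
      (((a (σ (Fin.last t)) : S k n)) ⊗ₜ[k]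
        (ExteriorAlgebra.ιMulti k t (fun j => mulW (b j) (a (σ j.castSucc))) :
          ExteriorAlgebra k (S2 k n)))

/-- The cycle `Z_i` (0-indexed: `Zel i` is the paper's `Z_i` for `0 ≤ i ≤ n-1`), namely
`Z_i = Σ_{j=0}^{i} (-1)^{j} x_j ⊗ (x_0 x_i ∧ ⋯ ∧ x̂_j x_i ∧ ⋯ ∧ x_{i-1} x_i ∧ x_i²)`. -/
def Zel (i : Fin n) : KK k n :=
  ∑ j : Fin ((i:ℕ)+1),
    ((-1:ℤ)^(j:ℕ)) •
      ((X (Fin.castLE i.isLt j) : S k n) ⊗ₜ[k]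
        (ExteriorAlgebra.ιMulti k (i:ℕ)
          (fun l : Fin (i:ℕ) => q (Fin.castLE i.isLt (j.succAbove l)) i) :
            ExteriorAlgebra k (S2 k n)))


open scoped MatrixGroups

/-- The action of `g ∈ GL_n(k)` on `S` by the invertible linear substitution
`x_i ↦ Σ_j g_{ij} x_j` of the variables, as a `k`-algebra homomorphism. -/
def subst (g : GL (Fin n) k) : S k n →ₐ[k] S k n :=
  aeval (fun i => ∑ j, (g : Matrix (Fin n) (Fin n) k) i j • X j)

/-- Linear substitutions preserve homogeneous components. -/
lemma subst_isHomogeneous (g : GL (Fin n) k) {d : ℕ} {f : S k n}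
    (hf : f.IsHomogeneous d) : (subst g f).IsHomogeneous d := by
  have hg : ∀ i, ((∑ j, (g : Matrix (Fin n) (Fin n) k) i j • X j : S k n)).IsHomogeneous 1 := by
    intro i
    rw [← mem_homogeneousSubmodule]
    exact Submodule.sum_mem _ fun j _ => Submodule.smul_mem _ _
      ((mem_homogeneousSubmodule 1 _).2 (isHomogeneous_X _ _))
  simpa [subst] using hf.aeval _ hg

/-- The action of `g ∈ GL_n(k)` on `S_2`. -/
def substS2 (g : GL (Fin n) k) : S2 k n →ₗ[k] S2 k n :=
  LinearMap.restrict (subst g).toLinearMap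
    (fun x hx => by
      rw [mem_homogeneousSubmodule] at hx ⊢
      exact subst_isHomogeneous g hx)

/-- The (diagonal) action of `g ∈ GL_n(k)` on the Koszul complex `K = S ⊗ Λ(S_2)`;
it commutes with the differential and the product. -/
def gact (g : GL (Fin n) k) : KK k n →ₐ[k] KK k n :=
  Algebra.TensorProduct.map (subst g) (ExteriorAlgebra.map (substS2 g))

/-!
Let `E_pr` be the operators of `𝔤𝔩_n` on `K = S ⊗ ⋀ S₂`, `d` the Koszul differential and
`δ = ½ Σ y_ij ∂_i ∂_j`. Then `2 (d δ + δ d)` is the Casimir operator `Σ E_pr E_rp - n Σ E_pp`.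
Let `Q` be a `GL_n`-stable space of cycles containing the boundaries. Among the weights of
given total degree of cycles outside `Q`, one maximizing the Casimir value `Σ l_p (l_p - 2p - 1)`
is a highest weight modulo `Q`, so its Casimir value is zero, because `d δ + δ d` maps cycles to
boundaries.

Apply this, by induction on the number of variables, to the cycles generated by squarefree monomials
in the `Z_i`, with `l` a weight of Casimir value zero in `n + 1` variables. If a coordinate of `l`
is zero, a permutation reduces to `n` variables. If a coordinate is at least `n + 1`, move it to the
last place; expanding in the last variable `x` and in the `y_{j,last}` shows that the cycle is `Z_n`
times a cycle in `n` variables, modulo boundaries and the ideal `(x², y_{last,last})`, whose cycles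
are boundaries. Otherwise all coordinates lie between `1` and `n`, and the same expansion shows
that the Casimir value of `l` is smaller than that of a weight of homology in `n` variables, which
is at most zero.
-/

/-! ### The Koszul algebra and its generators -/

/-- The algebra `S ⊗ ⋀ S₂` underlying the Koszul complex. It is a copy of `KK k n` that carries only
the ring and algebra instances, which keeps instance search away from tensor products. -/
def KoszulAlgebra (k : Type) [Field k] (n : ℕ) : Type := KK k n

namespace KoszulAlgebra

instance : Ring (KoszulAlgebra k n) := inferInstanceAs (Ring (KK k n))
instance : Algebra k (KoszulAlgebra k n) := inferInstanceAs (Algebra k (KK k n))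

/-- The pure tensor `f ⊗ ω`, as a bilinear map into the Koszul algebra. -/
def tmul : S k n →ₗ[k] ExteriorAlgebra k (S2 k n) →ₗ[k] KoszulAlgebra k n :=
  TensorProduct.mk k _ _

lemma tmul_mul_tmul (f g : S k n) (v w : ExteriorAlgebra k (S2 k n)) :
    tmul f v * tmul g w = tmul (f * g) (v * w) :=
  Algebra.TensorProduct.tmul_mul_tmul f g v w

lemma tmul_one_one : tmul (1 : S k n) 1 = 1 := rfl

lemma ext_tmul {V : Type*} [AddCommGroup V] [Module k V] {F G : KoszulAlgebra k n →ₗ[k] V}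
    (h : ∀ f w, F (tmul f w) = G (tmul f w)) (u : KoszulAlgebra k n) : F u = G u :=
  LinearMap.congr_fun (TensorProduct.ext' h : F = G) u

/-- The variable `x_i`. -/
def x (i : Fin n) : KoszulAlgebra k n := tmul (X i) 1

/-- The exterior generator `y_ij`, which the Koszul differential sends to `x_i x_j`. -/
def y (i j : Fin n) : KoszulAlgebra k n := tmul 1 (ExteriorAlgebra.ι k (q i j))

lemma q_comm (i j : Fin n) : (q i j : S2 k n) = q j i :=
  Subtype.ext (mul_comm _ _)

lemma y_symm (i j : Fin n) : (y i j : KoszulAlgebra k n) = y j i := by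
  rw [y, y, q_comm]

lemma x_mul_x (i j : Fin n) : (x i : KoszulAlgebra k n) * x j = x j * x i := by
  simp only [x, tmul_mul_tmul, mul_comm]

lemma y_mul_x (i a b : Fin n) : (y a b : KoszulAlgebra k n) * x i = x i * y a b := by
  simp only [x, y, tmul_mul_tmul, one_mul, mul_one]

lemma y_mul_y (a b i j : Fin n) : (y a b : KoszulAlgebra k n) * y i j = -(y i j * y a b) := by
  simp only [y, tmul_mul_tmul, one_mul, ← map_neg]
  exact congrArg _ (eq_neg_of_add_eq_zero_left (ExteriorAlgebra.ι_add_mul_swap _ _))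

lemma y_mul_self (a b : Fin n) : (y a b : KoszulAlgebra k n) * y a b = 0 := by
  simp only [y, tmul_mul_tmul, ExteriorAlgebra.ι_sq_zero, map_zero]

lemma x_mul_x_mul (i j : Fin n) (u : KoszulAlgebra k n) : x i * (x j * u) = x j * (x i * u) := by
  rw [← mul_assoc, x_mul_x, mul_assoc]

lemma y_mul_x_mul (i a b : Fin n) (u : KoszulAlgebra k n) :
    y a b * (x i * u) = x i * (y a b * u) := by
  rw [← mul_assoc, y_mul_x, mul_assoc]

lemma y_mul_y_mul (a b i j : Fin n) (u : KoszulAlgebra k n) :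
    y a b * (y i j * u) = -(y i j * (y a b * u)) := by
  rw [← mul_assoc, y_mul_y, neg_mul, mul_assoc]

lemma y_mul_self_mul (a b : Fin n) (u : KoszulAlgebra k n) : y a b * (y a b * u) = 0 := by
  rw [← mul_assoc, y_mul_self, zero_mul]

lemma eq_zero_of_x_mul_eq_zero {i : Fin n} {u : KoszulAlgebra k n} (h : x i * u = 0) : u = 0 := by
  let mulX : KoszulAlgebra k n →ₗ[k] KoszulAlgebra k n :=
    (LinearMap.rTensor _ (LinearMap.mulLeft k (X i : S k n)) : KK k n →ₗ[k] KK k n)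
  have hinj : Function.Injective mulX :=
    Module.Flat.rTensor_preserves_injective_linearMap _ (mul_right_injective₀ (X_ne_zero i))
  have hmul : mulX u = LinearMap.mulLeft k (x i) u := by
    refine ext_tmul (fun f w => ?_) u
    rw [LinearMap.mulLeft_apply, x, tmul_mul_tmul, one_mul]
    exact LinearMap.rTensor_tmul _ _ _ _
  exact (injective_iff_map_eq_zero mulX).1 hinj u (hmul.trans h)

lemma exists_eq_single_add_single_of_degree_eq_two {σ : Type*} {d : σ →₀ ℕ} (hd : d.degree = 2) :
    ∃ i j, d = Finsupp.single i 1 + Finsupp.single j 1 := by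
  classical
  have hcard : d.toMultiset.card = 2 := by
    rw [Finsupp.card_toMultiset]
    simpa [Finsupp.degree_apply, Finsupp.sum] using hd
  obtain ⟨i, j, hij⟩ := Multiset.card_eq_two.1 hcard
  refine ⟨i, j, Finsupp.orderIsoMultiset.injective ?_⟩
  rw [Finsupp.coe_orderIsoMultiset, hij, map_add, Finsupp.toMultiset_single,
    Finsupp.toMultiset_single, one_smul, one_smul]
  rfl

lemma span_range_q :
    Submodule.span k (Set.range fun p : Fin n × Fin n => (q p.1 p.2 : S2 k n)) = ⊤ := by
  rw [eq_top_iff, ← Submodule.map_le_map_iff_of_injective (S2 k n).injective_subtype]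
  rintro _ ⟨⟨f, hf⟩, -, rfl⟩
  change f ∈ _
  rw [f.as_sum]
  refine Submodule.sum_mem _ fun d hd => ?_
  have hdeg : d.degree = 2 := by
    by_contra h
    exact mem_support_iff.1 hd (((mem_homogeneousSubmodule 2 f).1 hf).coeff_eq_zero h)
  obtain ⟨i, j, rfl⟩ := exists_eq_single_add_single_of_degree_eq_two hdeg
  refine ⟨coeff (Finsupp.single i 1 + Finsupp.single j 1) f • q i j,
    Submodule.smul_mem _ _ (Submodule.subset_span ⟨(i, j), rfl⟩), ?_⟩
  simp [q, mulW, xv, X, monomial_mul, smul_monomial]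

section Generation

variable {A : Subalgebra k (KoszulAlgebra k n)}

lemma tmul_one_mem_of_x_mem (hx : ∀ i, x i ∈ A) (f : S k n) : tmul f 1 ∈ A := by
  let incl : S k n →ₐ[k] KoszulAlgebra k n :=
    (Algebra.TensorProduct.includeLeft : S k n →ₐ[k] KK k n)
  have hle : Algebra.adjoin k (Set.range (X : Fin n → S k n)) ≤ A.comap incl :=
    Algebra.adjoin_le (by rintro _ ⟨i, rfl⟩; exact hx i)
  exact hle (by rw [adjoin_range_X]; exact Algebra.mem_top)

lemma one_tmul_mem_of_y_mem (hy : ∀ i j, y i j ∈ A) (w : ExteriorAlgebra k (S2 k n)) :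
    tmul 1 w ∈ A := by
  let incl : ExteriorAlgebra k (S2 k n) →ₐ[k] KoszulAlgebra k n :=
    (Algebra.TensorProduct.includeRight : ExteriorAlgebra k (S2 k n) →ₐ[k] KK k n)
  have hspan : Submodule.span k (Set.range fun p : Fin n × Fin n => (q p.1 p.2 : S2 k n)) ≤
      (Subalgebra.toSubmodule A).comap (tmul 1 ∘ₗ ExteriorAlgebra.ι k) :=
    Submodule.span_le.2 (by rintro _ ⟨⟨i, j⟩, rfl⟩; exact hy i j)
  have hle : Algebra.adjoin k (Set.range (ExteriorAlgebra.ι k : S2 k n → _)) ≤ A.comap incl :=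
    Algebra.adjoin_le (by
      rintro _ ⟨m, rfl⟩
      exact hspan (by rw [span_range_q]; exact Submodule.mem_top))
  exact hle ((CliffordAlgebra.adjoin_range_ι (Q := (0 : QuadraticForm k (S2 k n)))).symm ▸
    Algebra.mem_top)

lemma eq_top_of_x_mem_of_y_mem (hx : ∀ i, x i ∈ A) (hy : ∀ i j, y i j ∈ A) : A = ⊤ := by
  refine Algebra.eq_top_iff.2 fun u => ?_
  induction u using TensorProduct.induction_on with
  | zero => exact A.zero_mem
  | add u v hu hv => exact A.add_mem hu hv
  | tmul f w =>
    have hfactor : tmul f w = tmul f 1 * tmul 1 w := by rw [tmul_mul_tmul, mul_one, one_mul]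
    have hmem := A.mul_mem (tmul_one_mem_of_x_mem hx f) (one_tmul_mem_of_y_mem hy w)
    rwa [← hfactor] at hmem

end Generation

theorem eq_top_of_mul_mem {N : Submodule k (KoszulAlgebra k n)} (one : 1 ∈ N)
    (x_mul : ∀ i, ∀ u ∈ N, x i * u ∈ N) (y_mul : ∀ i j, ∀ u ∈ N, y i j * u ∈ N) : N = ⊤ := by
  let A : Subalgebra k (KoszulAlgebra k n) :=
    { carrier := {a | ∀ u ∈ N, a * u ∈ N}
      mul_mem' := fun {a b} ha hb u hu => by
        rw [mul_assoc]
        exact ha _ (hb u hu)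
      add_mem' := fun {a b} ha hb u hu => by
        rw [add_mul]
        exact N.add_mem (ha u hu) (hb u hu)
      algebraMap_mem' := fun r u hu => by
        rw [← Algebra.smul_def]
        exact N.smul_mem r hu }
  refine eq_top_iff.2 fun u _ => ?_
  have hu : u ∈ A := (eq_top_of_x_mem_of_y_mem (A := A) x_mul y_mul).symm ▸ Algebra.mem_top
  simpa using hu 1 one

@[elab_as_elim]
theorem induction_on {p : KoszulAlgebra k n → Prop} (u : KoszulAlgebra k n) (one : p 1)
    (add : ∀ u v, p u → p v → p (u + v)) (smul : ∀ (c : k) u, p u → p (c • u))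
    (x_mul : ∀ i u, p u → p (x i * u)) (y_mul : ∀ i j u, p u → p (y i j * u)) : p u := by
  let N : Submodule k (KoszulAlgebra k n) :=
    { carrier := {u | p u}
      zero_mem' := by simpa using smul 0 1 one
      add_mem' := fun {u v} => add u v
      smul_mem' := smul }
  have hu : u ∈ N := eq_top_of_mul_mem (N := N) one x_mul y_mul ▸ Submodule.mem_top
  exact hu

/-! ### Partial derivatives and contractions -/

/-- The Kronecker delta with values in `k`. -/
def delta {ι : Type*} [DecidableEq ι] (i j : ι) : k := if i = j then 1 else 0

section Delta

variable {ι V : Type*} [DecidableEq ι] [AddCommGroup V] [Module k V]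

@[simp] lemma delta_self (i : ι) : (delta i i : k) = 1 := if_pos rfl

lemma delta_of_ne {i j : ι} (h : i ≠ j) : (delta i j : k) = 0 := if_neg h

lemma delta_comm (i j : ι) : (delta i j : k) = delta j i := by
  simp only [delta, eq_comm]

lemma delta_smul_congr (i j : ι) (f : ι → V) : (delta i j : k) • f i = (delta i j : k) • f j := by
  rcases eq_or_ne i j with rfl | h
  · rfl
  · simp only [delta_of_ne h, zero_smul]

lemma sum_delta_smul [Fintype ι] (i : ι) (f : ι → V) : ∑ j, (delta i j : k) • f j = f i := by
  simp [delta]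

lemma sum_delta_smul' [Fintype ι] (i : ι) (f : ι → V) : ∑ j, (delta j i : k) • f j = f i := by
  simp [delta]

end Delta

/-- The partial derivative `∂/∂x_i`. -/
def dx (i : Fin n) : KoszulAlgebra k n →ₗ[k] KoszulAlgebra k n :=
  (LinearMap.rTensor _ (pderiv i : Derivation k (S k n) (S k n)).toLinearMap : KK k n →ₗ[k] KK k n)

/-- The functional `f ↦ ∂²f/∂x_i∂x_j` on quadratic forms. -/
def secondDeriv (i j : Fin n) : Module.Dual k (S2 k n) :=
  (aeval fun _ => (0 : k) : S k n →ₐ[k] k).toLinearMap ∘ₗ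
    (pderiv i : Derivation k (S k n) (S k n)).toLinearMap ∘ₗ
    (pderiv j : Derivation k (S k n) (S k n)).toLinearMap ∘ₗ (S2 k n).subtype

/-- Contraction of the exterior factor with the functional `∂²/∂x_i∂x_j`. For `i ≠ j` it is the
derivative with respect to `y_ij = y_ji`, for `i = j` it is twice the derivative with respect to
`y_ii`. -/
def dy (i j : Fin n) : KoszulAlgebra k n →ₗ[k] KoszulAlgebra k n :=
  (LinearMap.lTensor _ (CliffordAlgebra.contractLeft (Q := (0 : QuadraticForm k (S2 k n)))
    (secondDeriv i j)) : KK k n →ₗ[k] KK k n)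

lemma dx_tmul (i : Fin n) (f : S k n) (w : ExteriorAlgebra k (S2 k n)) :
    dx i (tmul f w) = tmul (pderiv i f) w :=
  LinearMap.rTensor_tmul _ _ _ _

lemma dy_tmul (i j : Fin n) (f : S k n) (w : ExteriorAlgebra k (S2 k n)) :
    dy i j (tmul f w) = tmul f (CliffordAlgebra.contractLeft
      (Q := (0 : QuadraticForm k (S2 k n))) (secondDeriv i j) w) :=
  LinearMap.lTensor_tmul _ _ _ _

lemma pderiv_X_eq_C_delta (i j : Fin n) : pderiv i (X j : S k n) = C (delta i j) := by
  rcases eq_or_ne i j with rfl | h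
  · simp
  · simp [delta_of_ne h, pderiv_X_of_ne h.symm]

lemma pderiv_pderiv_comm (i j : Fin n) (f : S k n) :
    pderiv i (pderiv j f) = pderiv j (pderiv i f) := by
  have hbracket : ⁅(pderiv i : Derivation k (S k n) (S k n)),
      (pderiv j : Derivation k (S k n) (S k n))⁆ = 0 :=
    derivation_ext fun l => by
      simp [-pderiv_X, Derivation.commutator_apply, pderiv_X_eq_C_delta]
  simpa [Derivation.commutator_apply, sub_eq_zero] using DFunLike.congr_fun hbracket f

lemma secondDeriv_q (i j a b : Fin n) :
    secondDeriv i j (q a b : S2 k n) = delta i a * delta j b + delta i b * delta j a := by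
  simp only [secondDeriv, q, mulW, xv, LinearMap.coe_comp, AlgHom.coe_toLinearMap, aeval_eq_eval,
    eval_zero', Derivation.coeFn_coe, Submodule.coe_subtype, Function.comp_apply,
    Derivation.leibniz, pderiv_X_eq_C_delta, smul_eq_mul, map_add, derivation_C, mul_zero, zero_add,
    map_mul, constantCoeff_C]
  ring

lemma dy_symm (i j : Fin n) : (dy i j : KoszulAlgebra k n →ₗ[k] KoszulAlgebra k n) = dy j i := by
  have h : (secondDeriv i j : Module.Dual k (S2 k n)) = secondDeriv j i := by
    ext f
    simp [secondDeriv, pderiv_pderiv_comm i j]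
  rw [dy, h, dy]

lemma dx_one (i : Fin n) : dx i (1 : KoszulAlgebra k n) = 0 := by
  rw [← tmul_one_one, dx_tmul, Derivation.map_one_eq_zero, map_zero, LinearMap.zero_apply]

lemma dy_one (i j : Fin n) : dy i j (1 : KoszulAlgebra k n) = 0 := by
  rw [← tmul_one_one, dy_tmul, CliffordAlgebra.contractLeft_one, map_zero]

lemma dx_x_mul (i j : Fin n) (u : KoszulAlgebra k n) :
    dx i (x j * u) = (delta i j : k) • u + x j * dx i u := by
  refine ext_tmul (F := dx i ∘ₗ LinearMap.mulLeft k (x j))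
    (G := (delta i j : k) • LinearMap.id + LinearMap.mulLeft k (x j) ∘ₗ dx i) (fun f w => ?_) u
  simp [-pderiv_X, x, tmul_mul_tmul, dx_tmul, pderiv_X_eq_C_delta, mul_comm f, ← smul_eq_C_mul,
    add_comm]

lemma dx_y_mul (i a b : Fin n) (u : KoszulAlgebra k n) : dx i (y a b * u) = y a b * dx i u := by
  refine ext_tmul (F := dx i ∘ₗ LinearMap.mulLeft k (y a b))
    (G := LinearMap.mulLeft k (y a b) ∘ₗ dx i) (fun f w => ?_) u
  simp [y, tmul_mul_tmul, dx_tmul]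

lemma dy_x_mul (i j a : Fin n) (u : KoszulAlgebra k n) : dy i j (x a * u) = x a * dy i j u := by
  refine ext_tmul (F := dy i j ∘ₗ LinearMap.mulLeft k (x a))
    (G := LinearMap.mulLeft k (x a) ∘ₗ dy i j) (fun f w => ?_) u
  simp [x, tmul_mul_tmul, dy_tmul]

lemma dy_y_mul (i j a b : Fin n) (u : KoszulAlgebra k n) :
    dy i j (y a b * u) =
      (delta i a * delta j b + delta i b * delta j a : k) • u - y a b * dy i j u := by
  refine ext_tmul (F := dy i j ∘ₗ LinearMap.mulLeft k (y a b))
    (G := (delta i a * delta j b + delta i b * delta j a : k) • LinearMap.id -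
      LinearMap.mulLeft k (y a b) ∘ₗ dy i j) (fun f w => ?_) u
  have hcontract := CliffordAlgebra.contractLeft_ι_mul (Q := (0 : QuadraticForm k (S2 k n)))
    (secondDeriv i j) (q a b) w
  rw [secondDeriv_q] at hcontract
  simp only [y, LinearMap.comp_apply, LinearMap.mulLeft_apply, tmul_mul_tmul, one_mul, dy_tmul,
    LinearMap.sub_apply, LinearMap.smul_apply, LinearMap.id_apply, ← map_smul, ← map_sub]
  exact congrArg _ hcontract

lemma dx_dx_comm (i j : Fin n) (u : KoszulAlgebra k n) : dx i (dx j u) = dx j (dx i u) := by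
  refine ext_tmul (F := dx i ∘ₗ dx j) (G := dx j ∘ₗ dx i) (fun f w => ?_) u
  simp only [LinearMap.comp_apply, dx_tmul, pderiv_pderiv_comm i j]

lemma dy_dx (i a b : Fin n) (u : KoszulAlgebra k n) : dy a b (dx i u) = dx i (dy a b u) := by
  refine ext_tmul (F := dy a b ∘ₗ dx i) (G := dx i ∘ₗ dy a b) (fun f w => ?_) u
  simp only [LinearMap.comp_apply, dx_tmul, dy_tmul]

lemma dy_dy (a b i j : Fin n) (u : KoszulAlgebra k n) :
    dy a b (dy i j u) = -dy i j (dy a b u) := by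
  refine ext_tmul (F := dy a b ∘ₗ dy i j) (G := -(dy i j ∘ₗ dy a b)) (fun f w => ?_) u
  simp only [LinearMap.comp_apply, LinearMap.neg_apply, dy_tmul]
  rw [CliffordAlgebra.contractLeft_comm, map_neg]

lemma dy_dy_self (a b : Fin n) (u : KoszulAlgebra k n) : dy a b (dy a b u) = 0 := by
  refine ext_tmul (F := dy a b ∘ₗ dy a b) (G := 0) (fun f w => ?_) u
  simp only [LinearMap.comp_apply, LinearMap.zero_apply, dy_tmul,
    CliffordAlgebra.contractLeft_contractLeft, map_zero]

/-! ### The Koszul differential and its Laplacian -/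

/-- The Koszul differential: the derivation with `x_i ↦ 0` and `y_ij ↦ x_i x_j`. The factor `1/2`
accounts for summing over ordered pairs. -/
def diff : KoszulAlgebra k n →ₗ[k] KoszulAlgebra k n :=
  (2⁻¹ : k) • ∑ i, ∑ j, LinearMap.mulLeft k (x i) ∘ₗ LinearMap.mulLeft k (x j) ∘ₗ dy i j

/-- The adjoint `½ ∑ y_ij ∂_i ∂_j` of the Koszul differential. -/
def codiff : KoszulAlgebra k n →ₗ[k] KoszulAlgebra k n :=
  (2⁻¹ : k) • ∑ i, ∑ j, LinearMap.mulLeft k (y i j) ∘ₗ dx i ∘ₗ dx j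

/-- The polarization operator `E_pr`: the derivation through which the elementary matrix of
`𝔤𝔩_n` acts, replacing one index `r` by `p`. -/
def polar (p r : Fin n) : KoszulAlgebra k n →ₗ[k] KoszulAlgebra k n :=
  LinearMap.mulLeft k (x p) ∘ₗ dx r + ∑ s, LinearMap.mulLeft k (y p s) ∘ₗ dy r s

lemma diff_apply (u : KoszulAlgebra k n) :
    diff u = (2⁻¹ : k) • ∑ i, ∑ j, x i * (x j * dy i j u) := by
  simp [diff, LinearMap.sum_apply]

lemma codiff_apply (u : KoszulAlgebra k n) :
    codiff u = (2⁻¹ : k) • ∑ i, ∑ j, y i j * dx i (dx j u) := by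
  simp [codiff, LinearMap.sum_apply]

lemma polar_apply (p r : Fin n) (u : KoszulAlgebra k n) :
    polar p r u = x p * dx r u + ∑ s, y p s * dy r s u := by
  simp [polar, LinearMap.sum_apply]

lemma half_smul_add_self [NeZero (2 : k)] {V : Type*} [AddCommGroup V] [Module k V] (v : V) :
    (2⁻¹ : k) • (v + v) = v := by
  rw [← two_smul k, smul_smul, inv_mul_cancel₀ two_ne_zero, one_smul]

lemma diff_one : diff (1 : KoszulAlgebra k n) = 0 := by
  simp [diff_apply, dy_one]

lemma diff_x_mul (i : Fin n) (u : KoszulAlgebra k n) : diff (x i * u) = x i * diff u := by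
  simp only [diff_apply, dy_x_mul, mul_smul_comm, Finset.mul_sum, x_mul_x_mul i]

lemma diff_y_mul [NeZero (2 : k)] (a b : Fin n) (u : KoszulAlgebra k n) :
    diff (y a b * u) = x a * (x b * u) - y a b * diff u := by
  simp only [diff_apply, dy_y_mul, mul_sub, Finset.sum_sub_distrib, smul_sub, mul_smul_comm,
    Finset.mul_sum, y_mul_x_mul, add_smul, Finset.sum_add_distrib, mul_smul, mul_add,
    ← Finset.smul_sum, sum_delta_smul']
  rw [x_mul_x_mul b a, half_smul_add_self]

lemma diff_dy (a b : Fin n) (u : KoszulAlgebra k n) : diff (dy a b u) = -dy a b (diff u) := by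
  simp only [diff_apply, map_smul, map_sum, dy_x_mul, dy_dy a b, mul_neg, Finset.sum_neg_distrib,
    smul_neg, neg_neg]

lemma dx_diff [NeZero (2 : k)] (p : Fin n) (u : KoszulAlgebra k n) :
    dx p (diff u) = diff (dx p u) + ∑ j, x j * dy p j u := by
  have hsymm : ∑ j, x j * dy j p u = ∑ j, x j * dy p j u := by simp only [dy_symm _ p]
  simp only [diff_apply, map_smul, map_sum, dx_x_mul, mul_add, Finset.sum_add_distrib,
    mul_smul_comm, dy_dx, ← Finset.smul_sum, sum_delta_smul, hsymm]
  rw [← add_assoc, smul_add, half_smul_add_self, add_comm]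

lemma diff_diff [NeZero (2 : k)] (u : KoszulAlgebra k n) : diff (diff u) = 0 := by
  induction u using induction_on with
  | one => simp [diff_one]
  | add u v hu hv => simp [hu, hv]
  | smul c u hu => simp [hu]
  | x_mul i u hu => simp [diff_x_mul, hu]
  | y_mul i j u hu => simp [diff_y_mul, diff_x_mul, hu]

lemma polar_one (p r : Fin n) : polar p r (1 : KoszulAlgebra k n) = 0 := by
  simp [polar_apply, dx_one, dy_one]

lemma polar_x_mul (p r a : Fin n) (u : KoszulAlgebra k n) :
    polar p r (x a * u) = (delta r a : k) • (x p * u) + x a * polar p r u := by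
  simp only [polar_apply, dx_x_mul, dy_x_mul, mul_add, mul_smul_comm, Finset.mul_sum, y_mul_x_mul]
  rw [x_mul_x_mul p a, add_assoc]

lemma polar_y_mul (p r a b : Fin n) (u : KoszulAlgebra k n) :
    polar p r (y a b * u) = (delta r a : k) • (y p b * u) + (delta r b : k) • (y p a * u)
      + y a b * polar p r u := by
  simp only [polar_apply, dx_y_mul, dy_y_mul, mul_add, mul_sub, mul_smul_comm, Finset.mul_sum,
    y_mul_x_mul, Finset.sum_sub_distrib, add_smul, Finset.sum_add_distrib, mul_smul,
    ← Finset.smul_sum, sum_delta_smul', y_mul_y_mul p _ a b, Finset.sum_neg_distrib]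
  abel

lemma polar_diff [NeZero (2 : k)] (p r : Fin n) (u : KoszulAlgebra k n) :
    polar p r (diff u) = diff (polar p r u) := by
  induction u using induction_on with
  | one => simp [diff_one, polar_one]
  | add u v hu hv => simp [hu, hv]
  | smul c u hu => simp [hu]
  | x_mul i u hu => simp [diff_x_mul, polar_x_mul, hu]
  | y_mul i j u hu =>
    simp only [diff_y_mul, polar_x_mul, polar_y_mul, hu, map_sub, map_add, map_smul, mul_add,
      mul_smul_comm, smul_sub]
    rw [x_mul_x_mul i p]
    abel

lemma polar_polar (p r s t : Fin n) (u : KoszulAlgebra k n) :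
    polar p r (polar s t u) =
      polar s t (polar p r u) + (delta r s : k) • polar p t u - (delta t p : k) • polar s r u := by
  induction u using induction_on with
  | one => simp [polar_one]
  | add u v hu hv => simp only [map_add, hu, hv]; module
  | smul c u hu => simp only [map_smul, hu]; module
  | x_mul i u hu =>
    simp only [polar_x_mul, map_add, map_smul, hu, mul_add, mul_sub, mul_smul_comm]
    module
  | y_mul i j u hu =>
    simp only [polar_y_mul, map_add, map_smul, hu, mul_add, mul_sub, mul_smul_comm, y_symm s p]
    module

lemma polar_dx (p r j : Fin n) (u : KoszulAlgebra k n) :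
    polar p r (dx j u) = dx j (polar p r u) - (delta j p : k) • dx r u := by
  simp only [polar_apply, map_add, map_sum, dx_x_mul, dx_y_mul, dy_dx, dx_dx_comm r j]
  abel

lemma polar_dy (p r a b : Fin n) (u : KoszulAlgebra k n) :
    polar p r (dy a b u) =
      dy a b (polar p r u) - (delta a p : k) • dy r b u - (delta b p : k) • dy a r u := by
  simp only [polar_apply, map_add, map_sum, dy_x_mul, dy_y_mul, dy_dx, Finset.sum_sub_distrib,
    add_smul, Finset.sum_add_distrib, mul_smul, ← Finset.smul_sum, sum_delta_smul, dy_dy r _ a b,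
    smul_comm (delta a _ : k) (delta b p : k), mul_neg, Finset.sum_neg_distrib, dy_symm r a]
  abel

lemma codiff_x_mul [NeZero (2 : k)] (i : Fin n) (u : KoszulAlgebra k n) :
    codiff (x i * u) = x i * codiff u + ∑ j, y i j * dx j u := by
  have hsymm : ∑ j, y j i * dx j u = ∑ j, y i j * dx j u := by simp only [y_symm _ i]
  simp only [codiff_apply, dx_x_mul, map_add, map_smul, mul_add, mul_smul_comm,
    Finset.sum_add_distrib, y_mul_x_mul, Finset.mul_sum, ← Finset.smul_sum, sum_delta_smul',
    hsymm]
  rw [← add_assoc, smul_add, half_smul_add_self, add_comm]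

lemma codiff_y_mul (a b : Fin n) (u : KoszulAlgebra k n) :
    codiff (y a b * u) = -(y a b * codiff u) := by
  simp only [codiff_apply, dx_y_mul, y_mul_y_mul _ _ a b, Finset.sum_neg_distrib, smul_neg,
    mul_smul_comm, Finset.mul_sum]

/-- The shifted quadratic Casimir operator `∑ E_pr E_rp - n ∑ E_pp` of `𝔤𝔩_n`. -/
def casimir (u : KoszulAlgebra k n) : KoszulAlgebra k n :=
  ∑ p, ∑ r, polar p r (polar r p u) - (n : k) • ∑ p, polar p p u

lemma casimir_x_mul (i : Fin n) (u : KoszulAlgebra k n) :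
    casimir (x i * u) = x i * casimir u + (2 : k) • ∑ r, x r * polar i r u := by
  simp only [casimir, polar_x_mul, map_add, map_smul, delta_self, one_smul, smul_add,
    Finset.sum_add_distrib, ← Finset.smul_sum, sum_delta_smul', mul_sub, Finset.mul_sum,
    mul_smul_comm, Finset.sum_const, Finset.card_univ, Fintype.card_fin, ← Nat.cast_smul_eq_nsmul k]
  module

lemma casimir_y_mul (a b : Fin n) (u : KoszulAlgebra k n) :
    casimir (y a b * u) = y a b * casimir u +
      (2 : k) • (y a b * u + (∑ r, y r b * polar a r u + ∑ r, y r a * polar b r u)) := by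
  simp only [casimir, polar_y_mul, map_add, map_smul, delta_self, one_smul, smul_add,
    Finset.sum_add_distrib, ← Finset.smul_sum, sum_delta_smul', mul_sub, Finset.mul_sum,
    mul_smul_comm, Finset.sum_const, Finset.card_univ, Fintype.card_fin,
    ← Nat.cast_smul_eq_nsmul k, y_symm b a]
  module

lemma sum_y_mul_polar_add (a b : Fin n) (u : KoszulAlgebra k n) :
    ∑ r, y r b * polar a r u + ∑ r, y r a * polar b r u =
      x a * ∑ r, y b r * dx r u + x b * ∑ r, y a r * dx r u := by
  have hcancel : ∑ r, ∑ s, y r b * (y a s * dy r s u) +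
      ∑ r, ∑ s, y r a * (y b s * dy r s u) = 0 := by
    rw [Finset.sum_comm (f := fun r s => y r a * (y b s * dy r s u)), ← Finset.sum_add_distrib]
    refine Finset.sum_eq_zero fun r _ => ?_
    rw [← Finset.sum_add_distrib]
    refine Finset.sum_eq_zero fun s _ => ?_
    rw [y_symm s a, y_symm b r, dy_symm s r, y_mul_y_mul, neg_add_cancel]
  simp only [polar_apply, mul_add, Finset.mul_sum, Finset.sum_add_distrib, y_mul_x_mul,
    y_symm b _, y_symm a _] at hcancel ⊢
  linear_combination (norm := module) hcancel

theorem two_smul_diff_codiff_add_codiff_diff [NeZero (2 : k)] (u : KoszulAlgebra k n) :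
    (2 : k) • (diff (codiff u) + codiff (diff u)) = casimir u := by
  induction u using induction_on with
  | one => simp [diff_one, codiff_apply, dx_one, casimir, polar_one]
  | add u v hu hv =>
    simp only [casimir, map_add, Finset.sum_add_distrib, smul_add] at hu hv ⊢
    linear_combination (norm := module) hu + hv
  | smul c u hu =>
    simp only [casimir, map_smul, ← Finset.smul_sum] at hu ⊢
    rw [← smul_add, smul_comm, hu]
    module
  | x_mul i u hu =>
    have hdx : ∑ j, (x i * (x j * dx j u) - y i j * diff (dx j u)) + ∑ j, y i j * dx j (diff u) =
        ∑ j, x j * polar i j u := by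
      simp only [dx_diff, polar_apply, mul_add, Finset.sum_add_distrib, Finset.sum_sub_distrib,
        Finset.mul_sum, y_mul_x_mul, x_mul_x_mul i]
      rw [Finset.sum_comm (f := fun j s => x s * (y i j * dy j s u))]
      simp only [dy_symm]
      abel
    rw [casimir_x_mul, ← hu, ← hdx]
    simp only [codiff_x_mul, diff_x_mul, map_add, map_sum, diff_y_mul, mul_smul_comm, mul_add]
    module
  | y_mul a b u hu =>
    rw [casimir_y_mul, ← hu, sum_y_mul_polar_add]
    simp only [codiff_x_mul, codiff_y_mul, diff_y_mul, map_sub, map_neg, dx_x_mul, mul_add,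
      mul_smul_comm, Finset.sum_add_distrib, sum_delta_smul', y_mul_x_mul, Finset.mul_sum]
    module

/-! ### Weights -/

/-- The space of elements of weight `l`: the simultaneous eigenspace of the `E_ii` with
eigenvalues `l i`. The elements of multidegree `l` lie in it. Weights are integral because the
derivatives lower them. -/
def weightSpace (l : Fin n → ℤ) : Submodule k (KoszulAlgebra k n) :=
  ⨅ i, LinearMap.ker (polar i i - (l i : k) • LinearMap.id)

lemma mem_weightSpace {l : Fin n → ℤ} {u : KoszulAlgebra k n} :
    u ∈ weightSpace l ↔ ∀ i, polar i i u = (l i : k) • u := by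
  simp [weightSpace, sub_eq_zero]

lemma cast_single_one (i j : Fin n) : ((Pi.single i (1 : ℤ) : Fin n → ℤ) j : k) = delta j i := by
  rw [Pi.single_apply, delta]
  split_ifs <;> simp

section WeightShift

variable {l : Fin n → ℤ} {u : KoszulAlgebra k n}

lemma one_mem_weightSpace : (1 : KoszulAlgebra k n) ∈ weightSpace 0 :=
  mem_weightSpace.2 fun i => by simp [polar_one]

lemma x_mul_mem_weightSpace (i : Fin n) (h : u ∈ weightSpace l) :
    x i * u ∈ weightSpace (l + Pi.single i 1) := mem_weightSpace.2 fun j => by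
  rw [polar_x_mul, mem_weightSpace.1 h j, delta_smul_congr j i fun j => x j * u, Pi.add_apply,
    Int.cast_add, cast_single_one, mul_smul_comm]
  module

lemma y_mul_mem_weightSpace (a b : Fin n) (h : u ∈ weightSpace l) :
    y a b * u ∈ weightSpace (l + Pi.single a 1 + Pi.single b 1) := mem_weightSpace.2 fun j => by
  rw [polar_y_mul, mem_weightSpace.1 h j, delta_smul_congr j a fun j => y j b * u,
    delta_smul_congr j b fun j => y j a * u, y_symm b a, Pi.add_apply, Pi.add_apply, Int.cast_add,
    Int.cast_add, cast_single_one, cast_single_one, mul_smul_comm]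
  module

lemma dx_mem_weightSpace (i : Fin n) (h : u ∈ weightSpace l) :
    dx i u ∈ weightSpace (l - Pi.single i 1) := mem_weightSpace.2 fun j => by
  rw [polar_dx, mem_weightSpace.1 h j, ← delta_smul_congr i j fun j => dx j u, delta_comm i j,
    Pi.sub_apply, Int.cast_sub, cast_single_one, map_smul]
  module

lemma dy_mem_weightSpace (a b : Fin n) (h : u ∈ weightSpace l) :
    dy a b u ∈ weightSpace (l - Pi.single a 1 - Pi.single b 1) := mem_weightSpace.2 fun j => by
  rw [polar_dy, mem_weightSpace.1 h j, ← delta_smul_congr a j fun j => dy j b u,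
    ← delta_smul_congr b j fun j => dy a j u, delta_comm a j, delta_comm b j, Pi.sub_apply,
    Pi.sub_apply, Int.cast_sub, Int.cast_sub, cast_single_one, cast_single_one, map_smul]
  module

lemma polar_mem_weightSpace (p r : Fin n) (h : u ∈ weightSpace l) :
    polar p r u ∈ weightSpace (l + Pi.single p 1 - Pi.single r 1) := mem_weightSpace.2 fun j => by
  rw [polar_polar, mem_weightSpace.1 h j, delta_smul_congr j p fun j => polar j r u,
    ← delta_smul_congr r j fun j => polar p j u, delta_comm r j, Pi.sub_apply, Pi.add_apply,
    Int.cast_sub, Int.cast_add, cast_single_one, cast_single_one, map_smul]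
  module

lemma diff_mem_weightSpace [NeZero (2 : k)] (h : u ∈ weightSpace l) : diff u ∈ weightSpace l :=
  mem_weightSpace.2 fun j => by rw [polar_diff, mem_weightSpace.1 h j, map_smul]

end WeightShift

theorem iSup_eq_top_of_graded {p : (Fin n → ℕ) → Submodule k (KoszulAlgebra k n)} (one : 1 ∈ p 0)
    (x_mul : ∀ i μ, ∀ u ∈ p μ, x i * u ∈ p (μ + Pi.single i 1))
    (y_mul : ∀ i j μ, ∀ u ∈ p μ, y i j * u ∈ p (μ + Pi.single i 1 + Pi.single j 1)) :
    ⨆ μ, p μ = ⊤ := by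
  refine eq_top_of_mul_mem (Submodule.mem_iSup_of_mem 0 one) (fun i => ?_) fun i j => ?_
  · have hle : ⨆ μ, p μ ≤ (⨆ μ, p μ).comap (LinearMap.mulLeft k (x i)) :=
      iSup_le fun μ u hu => Submodule.mem_iSup_of_mem _ (x_mul i μ u hu)
    exact hle
  · have hle : ⨆ μ, p μ ≤ (⨆ μ, p μ).comap (LinearMap.mulLeft k (y i j)) :=
      iSup_le fun μ u hu => Submodule.mem_iSup_of_mem _ (y_mul i j μ u hu)
    exact hle

lemma natCast_add_single (μ : Fin n → ℕ) (i : Fin n) :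
    (fun j => ((μ + Pi.single i 1 : Fin n → ℕ) j : ℤ)) = (fun j => (μ j : ℤ)) + Pi.single i 1 := by
  funext j
  by_cases h : j = i
  · subst h; simp
  · simp [h]

theorem iSup_weightSpace_natCast :
    ⨆ μ : Fin n → ℕ, (weightSpace fun i => (μ i : ℤ) : Submodule k (KoszulAlgebra k n)) = ⊤ := by
  refine iSup_eq_top_of_graded (by simpa using! one_mem_weightSpace) (fun i μ u hu => ?_)
    fun i j μ u hu => ?_
  · rw [natCast_add_single]
    exact x_mul_mem_weightSpace i hu
  · rw [natCast_add_single, natCast_add_single]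
    exact y_mul_mem_weightSpace i j hu

theorem exists_weight_decomposition (u : KoszulAlgebra k n) :
    ∃ f : (Fin n → ℤ) →₀ KoszulAlgebra k n, (∀ μ, f μ ∈ weightSpace μ) ∧ (∀ μ, f μ ≠ 0 → 0 ≤ μ) ∧
      (f.sum fun _ v => v) = u := by
  have hu : u ∈ ⨆ μ : Fin n → ℕ, (weightSpace fun i => (μ i : ℤ) :
      Submodule k (KoszulAlgebra k n)) :=
    iSup_weightSpace_natCast (k := k) (n := n) ▸ Submodule.mem_top
  obtain ⟨f, hf, hsum⟩ := (Submodule.mem_iSup_iff_exists_finsupp _ _).1 hu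
  let cast : (Fin n → ℕ) ↪ (Fin n → ℤ) := ⟨fun μ i => μ i, fun μ ν h => funext fun i => by
    simpa using congrFun h i⟩
  refine ⟨f.embDomain cast, fun μ => ?_, fun μ hμ => ?_, by rw [Finsupp.sum_embDomain]; exact hsum⟩
  · by_cases hμ : μ ∈ Set.range cast
    · obtain ⟨ν, rfl⟩ := hμ
      rw [Finsupp.embDomain_apply_self]
      exact hf ν
    · rw [Finsupp.embDomain_of_notMem_range _ _ _ hμ]
      exact zero_mem _
  · obtain ⟨ν, rfl⟩ : μ ∈ Set.range cast := by
      by_contra h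
      exact hμ (Finsupp.embDomain_of_notMem_range _ _ _ h)
    exact fun i => Int.natCast_nonneg (ν i)

lemma mem_of_sum_mem_of_simultaneous_eigenvectors {ι α V : Type*} [AddCommGroup V] [Module k V]
    {f : ι → Module.End k V} {χ : α → ι → k} {Q : Submodule k V} (hQ : ∀ i, ∀ u ∈ Q, f i u ∈ Q)
    {F : Finset α} (hχ : Set.InjOn χ F) {v : α → V} (hv : ∀ a ∈ F, ∀ i, f i (v a) = χ a i • v a)
    (hsum : ∑ a ∈ F, v a ∈ Q) : ∀ a ∈ F, v a ∈ Q := by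
  classical
  induction F using Finset.induction_on generalizing v with
  | empty => simp
  | insert b F hb ih =>
    rw [Finset.forall_mem_insert] at hv
    rw [Finset.coe_insert, Set.injOn_insert (by exact hb)] at hχ
    have hF : ∀ a ∈ F, v a ∈ Q := by
      intro a ha
      obtain ⟨i, hi⟩ := Function.ne_iff.1 fun h : χ a = χ b => hχ.2 ⟨a, ha, h⟩
      have hshift : ∑ a ∈ F, (χ a i - χ b i) • v a ∈ Q := by
        have h := Q.sub_mem (hQ i _ hsum) (Q.smul_mem (χ b i) hsum)
        rw [Finset.sum_insert hb, map_add, hv.1, smul_add, add_sub_add_left_eq_sub, map_sum,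
          Finset.smul_sum, ← Finset.sum_sub_distrib] at h
        convert h using 1
        exact Finset.sum_congr rfl fun a ha => by rw [hv.2 a ha, sub_smul]
      have hmem := ih hχ.1
        (fun a ha j => by rw [map_smul, hv.2 a ha, smul_comm]) hshift a ha
      exact (Submodule.smul_mem_iff _ (sub_ne_zero.2 hi)).1 hmem
    refine Finset.forall_mem_insert _ _ _ |>.2 ⟨?_, hF⟩
    rwa [Finset.sum_insert hb, Submodule.add_mem_iff_left _ (Q.sum_mem hF)] at hsum

section WeightComponents

variable [CharZero k] {Q : Submodule k (KoszulAlgebra k n)} {l : Fin n → ℤ}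
  {u : KoszulAlgebra k n} {f : (Fin n → ℤ) →₀ KoszulAlgebra k n}

lemma sub_weight_component_mem (hQ : ∀ i, ∀ u ∈ Q, polar i i u ∈ Q) (hu : u ∈ weightSpace l)
    (hf : ∀ μ, f μ ∈ weightSpace μ) (h : u - (f.sum fun _ v => v) ∈ Q) : u - f l ∈ Q := by
  classical
  have hinj : Set.InjOn (fun (μ : Fin n → ℤ) i => (μ i : k)) (insert l f.support : Finset _) :=
    fun μ _ ν _ h => funext fun i => Int.cast_injective (congrFun h i)
  let g : (Fin n → ℤ) → KoszulAlgebra k n := Pi.single l u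
  have hg : ∀ μ, g μ ∈ weightSpace μ := fun μ => by
    rcases eq_or_ne μ l with rfl | hne
    · simpa [g] using hu
    · simp [g, hne]
  have hwt : ∀ μ ∈ insert l f.support, ∀ i, polar i i (g μ - f μ) = (μ i : k) • (g μ - f μ) :=
    fun μ _ => mem_weightSpace.1 (sub_mem (hg μ) (hf μ))
  have hsum : ∑ μ ∈ insert l f.support, (g μ - f μ) ∈ Q := by
    rwa [Finset.sum_sub_distrib, Finset.sum_pi_single', if_pos (Finset.mem_insert_self _ _),
      ← Finsupp.sum_of_support_subset f (Finset.subset_insert l _) (fun _ v => v) (by simp)]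
  simpa [g] using mem_of_sum_mem_of_simultaneous_eigenvectors hQ hinj hwt hsum l
    (Finset.mem_insert_self _ _)

lemma nonneg_of_mem_weightSpace (hu : u ∈ weightSpace l) (hne : u ≠ 0) : 0 ≤ l := by
  obtain ⟨f, hf, hnonneg, hsum⟩ := exists_weight_decomposition u
  have hmem : u - f l ∈ (⊥ : Submodule k (KoszulAlgebra k n)) :=
    sub_weight_component_mem (by simp) hu hf (by simp [hsum])
  rw [Submodule.mem_bot, sub_eq_zero] at hmem
  exact hnonneg l (hmem ▸ hne)

lemma exists_mem_weightSpace_sub_diff_mem (hQ : ∀ i, ∀ u ∈ Q, polar i i u ∈ Q)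
    (hu : u ∈ weightSpace l) {w : KoszulAlgebra k n} (hw : u - diff w ∈ Q) :
    ∃ w' ∈ weightSpace l, u - diff w' ∈ Q := by
  obtain ⟨f, hf, -, rfl⟩ := exists_weight_decomposition w
  refine ⟨f l, hf l, ?_⟩
  have hmem := sub_weight_component_mem (f := f.mapRange diff (map_zero _)) hQ hu
    (fun μ => diff_mem_weightSpace (hf μ))
    (by rwa [Finsupp.sum_mapRange_index fun _ => rfl, ← map_finsuppSum])
  exact hmem

end WeightComponents

/-- A weight is bad for `Q` if some cycle of this weight does not lie in `Q`. -/
def IsBadWeight (Q : Submodule k (KoszulAlgebra k n)) (l : Fin n → ℤ) : Prop :=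
  ∃ c ∈ weightSpace l, diff c = 0 ∧ c ∉ Q

lemma IsBadWeight.nonneg [CharZero k] {Q : Submodule k (KoszulAlgebra k n)} {l : Fin n → ℤ}
    (h : IsBadWeight Q l) : 0 ≤ l := by
  obtain ⟨c, hc, -, hcQ⟩ := h
  exact nonneg_of_mem_weightSpace hc fun h => hcQ (h ▸ zero_mem _)

lemma exists_isBadWeight [CharZero k] {Q : Submodule k (KoszulAlgebra k n)} {c : KoszulAlgebra k n}
    (hc : diff c = 0) (hcQ : c ∉ Q) : ∃ l, IsBadWeight Q l := by
  obtain ⟨f, hf, -, rfl⟩ := exists_weight_decomposition c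
  obtain ⟨μ, -, hμ⟩ : ∃ μ ∈ f.support, f μ ∉ Q := by
    by_contra! h
    exact hcQ (Q.sum_mem h)
  refine ⟨μ, f μ, hf μ, ?_, hμ⟩
  have hmem : (0 : KoszulAlgebra k n) - f μ ∈ LinearMap.ker (diff (k := k) (n := n)) :=
    sub_weight_component_mem
      (fun i u hu => by rw [LinearMap.mem_ker] at hu ⊢; rw [← polar_diff, hu, map_zero])
      (zero_mem _) hf (by rw [LinearMap.mem_ker, map_sub, hc, map_zero, sub_zero])
  simpa using hmem

/-! ### The Casimir operator on weight vectors -/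

/-- The eigenvalue of the Casimir operator on a highest weight vector of weight `l`; indices
start at `0`. -/
def casimirValue (l : Fin n → ℤ) : ℤ := ∑ p : Fin n, l p * (l p - 2 * (p : ℕ) - 1)

lemma sum_sum_ite_lt_sub (a : Fin n → k) :
    ∑ p, ∑ r, (if p < r then a p - a r else 0) =
      ∑ p : Fin n, a p * ((n : k) - 1 - 2 * (p : ℕ)) := by
  have hsplit : ∀ p r : Fin n, (if p < r then a p - a r else 0) =
      (if p < r then a p else 0) - (if p < r then a r else 0) := fun p r => by split_ifs <;> simp
  simp only [hsplit, Finset.sum_sub_distrib]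
  rw [Finset.sum_comm (f := fun p r : Fin n => if p < r then a r else 0),
    ← Finset.sum_sub_distrib]
  refine Finset.sum_congr rfl fun p _ => ?_
  have hcard : ((n - 1 - (p : ℕ) : ℕ) : k) = (n : k) - 1 - (p : ℕ) := by
    have := p.2
    rw [Nat.cast_sub (by omega), Nat.cast_sub (by omega), Nat.cast_one]
  rw [← Finset.sum_filter, ← Finset.sum_filter, Finset.sum_const, Finset.sum_const,
    Finset.filter_lt_eq_Ioi, Fin.card_Ioi, Finset.filter_gt_eq_Iio, Fin.card_Iio, nsmul_eq_mul,
    nsmul_eq_mul, hcard]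
  ring

lemma cast_casimirValue (l : Fin n → ℤ) :
    (casimirValue l : k) = ∑ p : Fin n, (l p : k) * ((n : k) - 1 - 2 * (p : ℕ)) +
      ∑ p, (l p : k) * l p - n * ∑ p, (l p : k) := by
  rw [casimirValue, Finset.mul_sum, ← Finset.sum_add_distrib, ← Finset.sum_sub_distrib]
  push_cast
  exact Finset.sum_congr rfl fun p _ => by ring

/-- The part `∑_{i<j} E_ji E_ij` of the Casimir operator, which kills highest weight vectors. -/
def lowerRaise (c : KoszulAlgebra k n) : KoszulAlgebra k n :=
  ∑ i, ∑ j, if i < j then polar j i (polar i j c) else 0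

theorem casimir_of_mem_weightSpace {l : Fin n → ℤ} {c : KoszulAlgebra k n}
    (hc : c ∈ weightSpace l) :
    casimir c = (casimirValue l : k) • c + (2 : k) • lowerRaise c := by
  rw [mem_weightSpace] at hc
  let F : Fin n → Fin n → KoszulAlgebra k n :=
    fun i j => if i < j then polar j i (polar i j c) else 0
  have hterm : ∀ p r, polar p r (polar r p c) =
      F p r + F r p + ((if p < r then (l p : k) - l r else 0) +
        (if p = r then (l p : k) * l p else 0)) • c := by
    intro p r
    rcases lt_trichotomy p r with hlt | rfl | hgt
    · simp only [F, hlt, not_lt_of_gt hlt, if_true, if_false, ne_of_lt hlt]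
      rw [polar_polar, hc p, hc r, delta_self, delta_self]
      module
    · simp only [F, lt_irrefl, if_true, if_false]
      rw [hc p, map_smul, hc p]
      module
    · simp only [F, hgt, not_lt_of_gt hgt, if_true, if_false, ne_of_gt hgt]
      module
  have htrace : ∑ p : Fin n, polar p p c = (∑ p, (l p : k)) • c := by
    simp only [hc, Finset.sum_smul]
  have hswap : ∑ p, ∑ r, F r p = lowerRaise c := Finset.sum_comm
  have hF : ∑ p, ∑ r, F p r = lowerRaise c := rfl
  simp only [casimir, hterm, Finset.sum_add_distrib, hswap, hF, ← Finset.sum_smul, htrace,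
    sum_sum_ite_lt_sub fun p => (l p : k), Finset.sum_ite_eq, Finset.mem_univ, if_true,
    cast_casimirValue]
  module

/-! ### Linear substitutions -/

section Substitution

variable {m p : ℕ}

/-- The substitution `x_i ↦ ∑_j A_ij x_j` on polynomials, for a matrix of any shape. -/
def substPoly (A : Matrix (Fin n) (Fin m) k) : S k n →ₐ[k] S k m :=
  aeval fun i => ∑ j, A i j • X j

lemma isHomogeneous_substPoly (A : Matrix (Fin n) (Fin m) k) {d : ℕ} {f : S k n}
    (hf : f.IsHomogeneous d) : (substPoly A f).IsHomogeneous d := by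
  have hlin : ∀ i, (∑ j, A i j • X j : S k m).IsHomogeneous 1 := fun i =>
    (mem_homogeneousSubmodule 1 _).1 (Submodule.sum_mem _ fun j _ => Submodule.smul_mem _ _
      ((mem_homogeneousSubmodule 1 _).2 (isHomogeneous_X _ _)))
  simpa [substPoly] using hf.aeval _ hlin

/-- The substitution `x_i ↦ ∑_j A_ij x_j` on quadratic forms. -/
def substQuad (A : Matrix (Fin n) (Fin m) k) : S2 k n →ₗ[k] S2 k m :=
  (substPoly A).toLinearMap.restrict fun f hf => by
    rw [mem_homogeneousSubmodule] at hf ⊢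
    exact isHomogeneous_substPoly A hf

/-- The algebra map induced by the substitution `x_i ↦ ∑_j A_ij x_j`. For an invertible matrix it
is the action `gact`, and `A` may be rectangular in order to change the number of variables. -/
def substMap (A : Matrix (Fin n) (Fin m) k) : KoszulAlgebra k n →ₐ[k] KoszulAlgebra k m :=
  (Algebra.TensorProduct.map (substPoly A) (ExteriorAlgebra.map (substQuad A)) :
    KK k n →ₐ[k] KK k m)

lemma substMap_tmul (A : Matrix (Fin n) (Fin m) k) (f : S k n)
    (w : ExteriorAlgebra k (S2 k n)) :
    substMap A (tmul f w) = tmul (substPoly A f) (ExteriorAlgebra.map (substQuad A) w) :=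
  Algebra.TensorProduct.map_tmul _ _ f w

lemma substPoly_one : substPoly (1 : Matrix (Fin n) (Fin n) k) = AlgHom.id k _ :=
  algHom_ext fun i => by simp [substPoly, Matrix.one_apply]

lemma substPoly_comp (A : Matrix (Fin n) (Fin m) k) (B : Matrix (Fin m) (Fin p) k) :
    (substPoly B).comp (substPoly A) = substPoly (A * B) := algHom_ext fun i => by
  simp only [AlgHom.comp_apply, substPoly, aeval_X, map_sum, map_smul, Finset.smul_sum, smul_smul,
    Matrix.mul_apply, Finset.sum_smul]
  exact Finset.sum_comm

lemma substMap_one (u : KoszulAlgebra k n) : substMap (1 : Matrix (Fin n) (Fin n) k) u = u := by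
  have hquad : substQuad (1 : Matrix (Fin n) (Fin n) k) = LinearMap.id :=
    LinearMap.ext fun f => Subtype.ext (AlgHom.congr_fun substPoly_one (f : S k n))
  refine ext_tmul (F := (substMap 1).toLinearMap) (G := LinearMap.id) (fun f w => ?_) u
  rw [AlgHom.toLinearMap_apply, substMap_tmul, hquad, substPoly_one, ExteriorAlgebra.map_id]
  rfl

lemma substMap_substMap (A : Matrix (Fin n) (Fin m) k) (B : Matrix (Fin m) (Fin p) k)
    (u : KoszulAlgebra k n) : substMap B (substMap A u) = substMap (A * B) u := by
  have hquad : substQuad B ∘ₗ substQuad A = substQuad (A * B) :=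
    LinearMap.ext fun f => Subtype.ext (AlgHom.congr_fun (substPoly_comp A B) (f : S k n))
  refine ext_tmul (F := ((substMap B).comp (substMap A)).toLinearMap)
    (G := (substMap (A * B)).toLinearMap) (fun f w => ?_) u
  simp only [AlgHom.toLinearMap_apply, AlgHom.comp_apply, substMap_tmul, ← hquad,
    ← substPoly_comp A B, ← ExteriorAlgebra.map_comp_map]

lemma substMap_x (A : Matrix (Fin n) (Fin m) k) (i : Fin n) :
    substMap A (x i) = ∑ j, A i j • (x j : KoszulAlgebra k m) := by
  simp only [x, substMap_tmul, map_one, substPoly, aeval_X, map_sum, map_smul,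
    LinearMap.sum_apply, LinearMap.smul_apply]

lemma substQuad_q (A : Matrix (Fin n) (Fin m) k) (i j : Fin n) :
    substQuad A (q i j) = ∑ a, ∑ b, (A i a * A j b) • (q a b : S2 k m) := by
  apply Subtype.ext
  simp only [substQuad, LinearMap.coe_restrict_apply, AlgHom.toLinearMap_apply, q, mulW, xv,
    map_mul, substPoly, aeval_X, AddSubmonoidClass.coe_finsetSum, Submodule.coe_smul,
    Finset.sum_mul_sum, smul_mul_smul_comm]

lemma substMap_y (A : Matrix (Fin n) (Fin m) k) (i j : Fin n) :
    substMap A (y i j) = ∑ a, ∑ b, (A i a * A j b) • (y a b : KoszulAlgebra k m) := by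
  simp only [y, substMap_tmul, map_one, ExteriorAlgebra.map_apply_ι, substQuad_q, map_sum, map_smul]

lemma substMap_x_mul (A : Matrix (Fin n) (Fin m) k) (i : Fin n) (u : KoszulAlgebra k n) :
    substMap A (x i * u) = ∑ j, A i j • (x j * substMap A u) := by
  simp only [map_mul, substMap_x, Finset.sum_mul, smul_mul_assoc]

lemma substMap_y_mul (A : Matrix (Fin n) (Fin m) k) (i j : Fin n) (u : KoszulAlgebra k n) :
    substMap A (y i j * u) = ∑ a, ∑ b, (A i a * A j b) • (y a b * substMap A u) := by
  simp only [map_mul, substMap_y, Finset.sum_mul, smul_mul_assoc]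

lemma substMap_diff [NeZero (2 : k)] (A : Matrix (Fin n) (Fin m) k) (u : KoszulAlgebra k n) :
    substMap A (diff u) = diff (substMap A u) := by
  induction u using induction_on with
  | one => simp [diff_one]
  | add u v hu hv => simp [hu, hv]
  | smul c u hu => simp [hu]
  | x_mul i u hu => simp only [diff_x_mul, substMap_x_mul, map_sum, map_smul, hu]
  | y_mul i j u hu =>
    simp only [diff_y_mul, substMap_x_mul, substMap_y_mul, map_sum, map_smul, hu, map_sub, smul_sub,
      Finset.sum_sub_distrib, mul_smul, Finset.mul_sum, Finset.smul_sum, mul_smul_comm]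

/-- The hypothesis says `A * e_rp = e_ba * A` in terms of matrix units. -/
lemma polar_substMap {A : Matrix (Fin n) (Fin m) k} {a b : Fin n} {p r : Fin m}
    (h : ∀ i j, A i r * delta p j = delta b i * A a j) (u : KoszulAlgebra k n) :
    polar p r (substMap A u) = substMap A (polar a b u) := by
  have hsum : ∀ (i : Fin n) (f : Fin m → KoszulAlgebra k m),
      A i r • f p = (delta b i : k) • ∑ j, A a j • f j := fun i f => by
    simp only [Finset.smul_sum, smul_smul, ← h]
    simp only [mul_smul, ← Finset.smul_sum, sum_delta_smul]
  induction u using induction_on with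
  | one => simp [polar_one]
  | add u v hu hv => simp [hu, hv]
  | smul c u hu => simp [hu]
  | x_mul i u hu =>
    simp only [substMap_x_mul, polar_x_mul, map_sum, map_add, map_smul, hu, smul_add,
      Finset.sum_add_distrib, smul_comm (A i _) (delta r _ : k), sum_delta_smul,
      hsum i fun j => x j * substMap A u]
  | y_mul i j u hu =>
    have hpair : ∀ i j, ∑ c, ∑ d, (A i c * A j d) • (delta r c : k) • (y p d * substMap A u) =
        (delta b i : k) • ∑ c, ∑ d, (A a c * A j d) • (y c d * substMap A u) := by
      intro i j
      rw [Finset.sum_comm, Finset.sum_comm (f := fun c d => (A a c * A j d) • _), Finset.smul_sum]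
      refine Finset.sum_congr rfl fun d _ => ?_
      simp only [smul_comm _ (delta r _ : k), sum_delta_smul]
      simp only [mul_comm _ (A j d), mul_smul, ← Finset.smul_sum, smul_comm _ (A j d),
        hsum i fun c => y c d * substMap A u]
    have hpair' : ∑ c, ∑ d, (A i c * A j d) • (delta r d : k) • (y p c * substMap A u) =
        (delta b j : k) • ∑ c, ∑ d, (A a c * A i d) • (y c d * substMap A u) := by
      rw [Finset.sum_comm, ← hpair j i]
      simp only [mul_comm (A i _)]
    simp only [substMap_y_mul, polar_y_mul, map_sum, map_add, map_smul, hu, smul_add,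
      Finset.sum_add_distrib, hpair, hpair']

end Substitution

/-! ### Submodules stable under the general linear group -/

/-- `Q` is stable under the action of `GL_n(k)`. -/
def IsGLStable (Q : Submodule k (KoszulAlgebra k n)) : Prop :=
  ∀ (g : GL (Fin n) k), ∀ u ∈ Q, substMap (g : Matrix (Fin n) (Fin n) k) u ∈ Q

section IsGLStable

variable {Q : Submodule k (KoszulAlgebra k n)}

lemma IsGLStable.substMap_mem_iff (hQ : IsGLStable Q) (g : GL (Fin n) k) {u : KoszulAlgebra k n} :
    substMap (g : Matrix (Fin n) (Fin n) k) u ∈ Q ↔ u ∈ Q := by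
  refine ⟨fun h => ?_, hQ g u⟩
  have hinv := hQ g⁻¹ _ h
  rwa [substMap_substMap, ← Units.val_mul, mul_inv_cancel, Units.val_one, substMap_one] at hinv

lemma isGLStable_range_diff [NeZero (2 : k)] :
    IsGLStable (LinearMap.range (diff (k := k) (n := n))) := by
  rintro g _ ⟨u, rfl⟩
  exact ⟨_, (substMap_diff _ _).symm⟩

/-- The permutation matrix of `σ`, as an element of `GL_n(k)`. -/
def permGL (σ : Equiv.Perm (Fin n)) : GL (Fin n) k :=
  .mkOfDetNeZero (σ.permMatrix k) (by
    rw [Matrix.det_permutation]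
    exact ((Equiv.Perm.sign σ).isUnit.map (Int.castRingHom k)).ne_zero)

lemma permGL_apply (σ : Equiv.Perm (Fin n)) (i j : Fin n) :
    (permGL σ : GL (Fin n) k).val i j = delta (σ i) j := by
  simp [permGL, Matrix.GeneralLinearGroup.mkOfDetNeZero, PEquiv.toMatrix_apply, delta, eq_comm]

lemma substMap_permGL_mem_weightSpace {l : Fin n → ℤ} {u : KoszulAlgebra k n}
    (σ : Equiv.Perm (Fin n)) (h : u ∈ weightSpace (l ∘ σ)) :
    substMap (permGL σ : GL (Fin n) k).val u ∈ weightSpace l := by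
  refine mem_weightSpace.2 fun j => ?_
  have hcomm : ∀ a b, (permGL σ : GL (Fin n) k).val a j * delta j b =
      delta (σ.symm j) a * (permGL σ : GL (Fin n) k).val (σ.symm j) b := fun a b => by
    rw [permGL_apply, permGL_apply, Equiv.apply_symm_apply, delta_comm (σ a)]
    simp only [delta, Equiv.symm_apply_eq]
  rw [polar_substMap hcomm, mem_weightSpace.1 h, map_smul, Function.comp_apply,
    Equiv.apply_symm_apply]

lemma IsBadWeight.comp_perm [NeZero (2 : k)] (hQ : IsGLStable Q) {l : Fin n → ℤ}
    (h : IsBadWeight Q l) (σ : Equiv.Perm (Fin n)) : IsBadWeight Q (l ∘ σ) := by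
  obtain ⟨c, hc, hdc, hcQ⟩ := h
  refine ⟨substMap (permGL σ⁻¹ : GL (Fin n) k).val c,
    substMap_permGL_mem_weightSpace σ⁻¹ ?_, ?_, fun hmem => hcQ ((hQ.substMap_mem_iff _).1 hmem)⟩
  · have hcomp : (l ∘ σ) ∘ ⇑σ⁻¹ = l := funext fun j => congrArg l (σ.apply_symm_apply j)
    rwa [hcomp]
  · rw [← substMap_diff, hdc, map_zero]

lemma coeff_mem_of_infinite_eval_mem {A : Type*} [Ring A] [Algebra k A] {Q : Submodule k A}
    {P : Polynomial A} (h : {s : k | P.eval (algebraMap k A s) ∈ Q}.Infinite) (r : ℕ) :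
    P.coeff r ∈ Q := by
  by_contra hr
  obtain ⟨φ, hφr, hφ⟩ := Submodule.exists_le_ker_of_notMem hr
  let p : Polynomial k := ∑ i ∈ P.support, Polynomial.monomial i (φ (P.coeff i))
  have heval : ∀ s, p.eval s = φ (P.eval (algebraMap k A s)) := fun s => by
    rw [P.eval_eq_sum, Polynomial.sum, map_sum, Polynomial.eval_finsetSum]
    refine Finset.sum_congr rfl fun i _ => ?_
    rw [Polynomial.eval_monomial, ← map_pow, ← Algebra.commutes, ← Algebra.smul_def, map_smul,
      smul_eq_mul, mul_comm]
  have hzero : p = 0 := Polynomial.eq_zero_of_infinite_isRoot p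
    (h.mono fun s hs => (heval s).trans (hφ hs))
  have hcoeff : p.coeff r = φ (P.coeff r) := by
    simp only [p, Polynomial.finsetSum_coeff, Polynomial.coeff_monomial, Finset.sum_ite_eq']
    split_ifs with hsupp
    · rfl
    · rw [Polynomial.notMem_support_iff.1 hsupp, map_zero]
  exact hφr (by rw [← hcoeff, hzero, Polynomial.coeff_zero])

lemma det_one_add_single (i j : Fin n) (s : k) :
    (1 + Matrix.single j i s).det = 1 + s * delta i j := by
  have hsingle : Matrix.single j i s = Matrix.vecMulVec (s • Pi.single j 1) (Pi.single i 1) := by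
    rw [Matrix.smul_vecMulVec, ← Matrix.single_eq_single_vecMulVec_single, Matrix.smul_single,
      smul_eq_mul, mul_one]
  rw [hsingle, Matrix.vecMulVec_eq Unit, Matrix.det_one_add_replicateCol_mul_replicateRow]
  simp [delta, Pi.single_apply, eq_comm]

lemma substMap_one_add_single_x_mul (i j a : Fin n) (s : k) (u : KoszulAlgebra k n) :
    substMap (1 + Matrix.single j i s) (x a * u) =
      (x a + s • (delta j a : k) • x i) * substMap (1 + Matrix.single j i s) u := by
  simp [substMap_x, Matrix.one_apply, Matrix.single_apply, delta, add_smul, Finset.sum_add_distrib,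
    ite_and, ite_smul]

lemma substMap_one_add_single_y_mul (i j a b : Fin n) (s : k) (u : KoszulAlgebra k n) :
    substMap (1 + Matrix.single j i s) (y a b * u) =
      (y a b + s • ((delta j a : k) • y i b + (delta j b : k) • y i a) +
        s • s • (delta j a : k) • (delta j b : k) • y i i) *
          substMap (1 + Matrix.single j i s) u := by
  have hentry : ∀ c d : Fin n, (1 + Matrix.single j i s) c d =
      delta c d + s * (delta j c * delta i d) := fun c d => by
    by_cases hc : j = c <;> simp [Matrix.one_apply, Matrix.single_apply, delta, hc]
  rw [map_mul, substMap_y]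
  congr 1
  simp only [hentry, add_mul, mul_add, add_smul, Finset.sum_add_distrib, mul_smul,
    ← Finset.smul_sum, sum_delta_smul, y_symm a i]
  module

lemma exists_polynomial_eval_eq_substMap (i j : Fin n) (u : KoszulAlgebra k n) :
    ∃ P : Polynomial (KoszulAlgebra k n),
      (∀ s, P.eval (algebraMap k _ s) = substMap (1 + Matrix.single j i s) u) ∧
        P.coeff 0 = u ∧ P.coeff 1 = polar i j u := by
  induction u using induction_on with
  | one => exact ⟨1, by simp, by simp, by simp [polar_one, Polynomial.coeff_one]⟩
  | add u v hu hv =>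
    obtain ⟨P, hP, hP0, hP1⟩ := hu
    obtain ⟨R, hR, hR0, hR1⟩ := hv
    exact ⟨P + R, by simp [hP, hR], by simp [hP0, hR0], by simp [hP1, hR1]⟩
  | smul c u hu =>
    obtain ⟨P, hP, hP0, hP1⟩ := hu
    exact ⟨c • P, by simp [hP], by simp [hP0], by simp [hP1]⟩
  | x_mul a u hu =>
    obtain ⟨P, hP, hP0, hP1⟩ := hu
    refine ⟨Polynomial.C (x a) * P + Polynomial.C ((delta j a : k) • x i) * P * Polynomial.X,
      fun s => ?_, ?_, ?_⟩
    · rw [substMap_one_add_single_x_mul, ← hP, Polynomial.eval_add, Polynomial.eval_mul_X,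
        Polynomial.eval_C_mul, Polynomial.eval_C_mul, ← Algebra.commutes, ← Algebra.smul_def,
        add_mul, smul_mul_assoc, smul_mul_assoc, smul_mul_assoc]
    · simp [hP0]
    · simp [hP0, hP1, polar_x_mul, Polynomial.coeff_C_mul, add_comm]
  | y_mul a b u hu =>
    obtain ⟨P, hP, hP0, hP1⟩ := hu
    refine ⟨Polynomial.C (y a b) * P +
        Polynomial.C ((delta j a : k) • y i b + (delta j b : k) • y i a) * P * Polynomial.X +
        Polynomial.C ((delta j a : k) • (delta j b : k) • y i i) * P * Polynomial.X * Polynomial.X,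
      fun s => ?_, ?_, ?_⟩
    · simp only [substMap_one_add_single_y_mul, ← hP, Polynomial.eval_add, Polynomial.eval_mul_X,
        Polynomial.eval_C_mul, ← Algebra.commutes s, ← Algebra.smul_def, add_mul, smul_mul_assoc]
    · simp [hP0]
    · simp [hP0, hP1, polar_y_mul, Polynomial.coeff_C_mul, add_comm, add_mul]

/-- The action of `GL_n` differentiates to that of `𝔤𝔩_n`: acting with `1 + s e_ji` is polynomial in
`s`, with linear coefficient `E_ij`. -/
lemma IsGLStable.polar_mem [Infinite k] (hQ : IsGLStable Q) (i j : Fin n)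
    {u : KoszulAlgebra k n} (hu : u ∈ Q) : polar i j u ∈ Q := by
  obtain ⟨P, hP, -, hP1⟩ := exists_polynomial_eval_eq_substMap i j u
  rw [← hP1]
  refine coeff_mem_of_infinite_eval_mem ((Set.finite_singleton (-1 : k)).infinite_compl.mono
    fun s hs => ?_) 1
  have hdet : (1 + Matrix.single j i s).det ≠ 0 := by
    rw [det_one_add_single, delta]
    split_ifs
    · exact fun h => hs (Set.mem_singleton_iff.2 (by linear_combination h))
    · simp
  have hmem := hQ (.mkOfDetNeZero _ hdet) u hu
  rwa [Set.mem_ofPred_eq, hP]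

end IsGLStable

/-! ### Highest weights -/

lemma sum_eq_sum_add_sub_add_sub {ι : Type*} [Fintype ι] {f g : ι → ℤ} {i j : ι} (hij : i ≠ j)
    (h : ∀ p, p ≠ i → p ≠ j → f p = g p) :
    ∑ p, f p = ∑ p, g p + (f i - g i) + (f j - g j) := by
  classical
  have hsub : ∑ p ∈ {i, j}, (f p - g p) = ∑ p, (f p - g p) := by
    refine Finset.sum_subset (Finset.subset_univ _) fun p _ hp => ?_
    simp only [Finset.mem_insert, Finset.mem_singleton, not_or] at hp
    rw [h p hp.1 hp.2, sub_self]
  rw [Finset.sum_pair hij, Finset.sum_sub_distrib] at hsub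
  linarith

lemma casimirValue_comp_swap (l : Fin n → ℤ) {i j : Fin n} (hij : i ≠ j) :
    casimirValue (l ∘ Equiv.swap i j) =
      casimirValue l + 2 * ((j : ℕ) - (i : ℕ)) * (l j - l i) := by
  rw [casimirValue, sum_eq_sum_add_sub_add_sub
    (g := fun p : Fin n => l p * (l p - 2 * (p : ℕ) - 1)) hij, ← casimirValue]
  · simp only [Function.comp_apply, Equiv.swap_apply_left, Equiv.swap_apply_right]
    ring
  · intro p hi hj
    simp only [Function.comp_apply, Equiv.swap_apply_of_ne_of_ne hi hj]

lemma casimirValue_add_single_sub_single (l : Fin n → ℤ) {i j : Fin n} (hij : i ≠ j) :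
    casimirValue (l + Pi.single i 1 - Pi.single j 1) =
      casimirValue l + 2 * (l i - l j + (j : ℕ) - (i : ℕ) + 1) := by
  rw [casimirValue, sum_eq_sum_add_sub_add_sub
    (g := fun p : Fin n => l p * (l p - 2 * (p : ℕ) - 1)) hij, ← casimirValue]
  · simp only [Pi.add_apply, Pi.sub_apply, Pi.single_eq_same, Pi.single_eq_of_ne hij,
      Pi.single_eq_of_ne hij.symm]
    ring
  · intro p hi hj
    simp only [Pi.add_apply, Pi.sub_apply, Pi.single_eq_of_ne hi, Pi.single_eq_of_ne hj, add_zero,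
      sub_zero]

section HighestWeight

variable [CharZero k] {Q : Submodule k (KoszulAlgebra k n)} {l m : Fin n → ℤ}

lemma IsBadWeight.exists_casimirValue_max (hl : IsBadWeight Q l) :
    ∃ m, IsBadWeight Q m ∧ casimirValue l ≤ casimirValue m ∧
      ∀ m', IsBadWeight Q m' → ∑ p, m' p = ∑ p, m p → casimirValue m' ≤ casimirValue m := by
  have hfin : {m | IsBadWeight Q m ∧ ∑ p, m p = ∑ p, l p}.Finite := by
    refine (Set.finite_Icc (0 : Fin n → ℤ) fun _ => ∑ p, l p).subset ?_
    rintro m ⟨hm, hsum⟩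
    refine ⟨hm.nonneg, fun i => ?_⟩
    rw [← hsum]
    exact Finset.single_le_sum (f := m) (fun p _ => hm.nonneg p) (Finset.mem_univ i)
  obtain ⟨m, ⟨hm, hsum⟩, hmax⟩ := Set.exists_max_image _ casimirValue hfin ⟨l, hl, rfl⟩
  exact ⟨m, hm, hmax l ⟨hl, rfl⟩, fun m' hm' hsum' => hmax m' ⟨hm', hsum'.trans hsum⟩⟩

lemma IsBadWeight.le_of_casimirValue_max (hQ : IsGLStable Q) (hm : IsBadWeight Q m)
    (hmax : ∀ m', IsBadWeight Q m' → ∑ p, m' p = ∑ p, m p → casimirValue m' ≤ casimirValue m)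
    {i j : Fin n} (hij : i < j) : m j ≤ m i := by
  by_contra! hlt
  have hle := hmax _ (hm.comp_perm hQ (Equiv.swap i j)) (Equiv.sum_comp (Equiv.swap i j) m)
  rw [casimirValue_comp_swap m hij.ne] at hle
  have hpos : (0 : ℤ) < (j : ℕ) - (i : ℕ) := sub_pos.2 (by exact_mod_cast hij)
  nlinarith [mul_pos hpos (sub_pos.2 hlt)]

lemma polar_mem_of_casimirValue_max (hQ : IsGLStable Q)
    (hmax : ∀ m', IsBadWeight Q m' → ∑ p, m' p = ∑ p, m p → casimirValue m' ≤ casimirValue m)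
    {c : KoszulAlgebra k n} (hc : c ∈ weightSpace m) (hdc : diff c = 0) (hcQ : c ∉ Q)
    {i j : Fin n} (hij : i < j) : polar i j c ∈ Q := by
  by_contra hmem
  have hsum : ∑ p, (m + Pi.single i 1 - Pi.single j 1 : Fin n → ℤ) p = ∑ p, m p := by
    simp [Finset.sum_add_distrib, Finset.sum_sub_distrib]
  have hle := hmax _ ⟨_, polar_mem_weightSpace i j hc, by rw [← polar_diff, hdc, map_zero], hmem⟩
    hsum
  rw [casimirValue_add_single_sub_single m hij.ne] at hle
  have hdom := IsBadWeight.le_of_casimirValue_max hQ ⟨c, hc, hdc, hcQ⟩ hmax hij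
  linarith [Int.ofNat_lt.2 hij]

/-- On a highest weight cycle the Casimir operator acts both by the scalar `casimirValue m` and
as `2 diff codiff`, so a nonzero scalar would make the cycle a boundary. -/
theorem IsBadWeight.exists_casimirValue_eq_zero (hQ : IsGLStable Q) (hd : ∀ u, diff u ∈ Q)
    (hl : IsBadWeight Q l) : ∃ m, IsBadWeight Q m ∧ casimirValue l ≤ casimirValue m ∧
      casimirValue m = 0 := by
  obtain ⟨m, ⟨c, hc, hdc, hcQ⟩, hle, hmax⟩ := hl.exists_casimirValue_max
  have hraise : lowerRaise c ∈ Q := Q.sum_mem fun i _ => Q.sum_mem fun j _ => by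
    split_ifs with hij
    · exact hQ.polar_mem j i (polar_mem_of_casimirValue_max hQ hmax hc hdc hcQ hij)
    · exact Q.zero_mem
  have hscalar : (casimirValue m : k) • c ∈ Q := by
    have hcasimir := casimir_of_mem_weightSpace hc
    rw [← two_smul_diff_codiff_add_codiff_diff, hdc, map_zero, add_zero] at hcasimir
    rw [← sub_eq_of_eq_add hcasimir]
    exact Q.sub_mem (Q.smul_mem _ (hd _)) (Q.smul_mem _ hraise)
  have hzero : casimirValue m = 0 := by
    by_contra hne
    exact hcQ ((Submodule.smul_mem_iff _ (by exact_mod_cast hne)).1 hscalar)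
  exact ⟨m, ⟨c, hc, hdc, hcQ⟩, hle, hzero⟩

end HighestWeight

/-! ### Changing the number of variables -/

/-- The inclusion of the Koszul algebra in `n` variables into the one in `n + 1` variables. -/
def incl : KoszulAlgebra k n →ₐ[k] KoszulAlgebra k (n + 1) :=
  substMap (Matrix.of fun i j => delta i.castSucc j)

/-- The projection that sets the last variable to zero. -/
def proj : KoszulAlgebra k (n + 1) →ₐ[k] KoszulAlgebra k n :=
  substMap (Matrix.of fun i j => delta i j.castSucc)

lemma incl_x (i : Fin n) : incl (x i) = (x i.castSucc : KoszulAlgebra k (n + 1)) := by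
  simp [incl, substMap_x, sum_delta_smul]

lemma incl_y (i j : Fin n) :
    incl (y i j) = (y i.castSucc j.castSucc : KoszulAlgebra k (n + 1)) := by
  simp [incl, substMap_y, mul_smul, ← Finset.smul_sum, sum_delta_smul]

lemma proj_x_castSucc (i : Fin n) : proj (x i.castSucc) = (x i : KoszulAlgebra k n) := by
  simp [proj, substMap_x, delta]

lemma proj_x_last : proj (x (Fin.last n)) = (0 : KoszulAlgebra k n) := by
  simp [proj, substMap_x, delta_of_ne (Fin.castSucc_ne_last _).symm]

lemma proj_y_castSucc (i j : Fin n) :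
    proj (y i.castSucc j.castSucc) = (y i j : KoszulAlgebra k n) := by
  simp [proj, substMap_y, delta]

lemma proj_y_last (i : Fin (n + 1)) : proj (y i (Fin.last n)) = (0 : KoszulAlgebra k n) := by
  simp [proj, substMap_y, delta_of_ne (Fin.castSucc_ne_last _).symm]

lemma proj_y_last_left (i : Fin (n + 1)) : proj (y (Fin.last n) i) = (0 : KoszulAlgebra k n) := by
  rw [y_symm, proj_y_last]

lemma polar_proj (i : Fin n) (u : KoszulAlgebra k (n + 1)) :
    polar i i (proj u) = proj (polar i.castSucc i.castSucc u) :=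
  polar_substMap (fun a b => by
    rw [Matrix.of_apply, Matrix.of_apply, delta_comm a]
    simp only [delta, Fin.castSucc_inj]) u

lemma polar_last_incl (u : KoszulAlgebra k n) :
    polar (Fin.last n) (Fin.last n) (incl u) = 0 := by
  have hne : ∀ i : Fin n, (delta (Fin.last n) i.castSucc : k) = 0 := fun i =>
    delta_of_ne (Fin.castSucc_ne_last i).symm
  induction u using induction_on with
  | one => simp [polar_one]
  | add u v hu hv => simp [hu, hv]
  | smul c u hu => simp [hu]
  | x_mul i u hu => simp [incl_x, polar_x_mul, hu, hne]
  | y_mul i j u hu => simp [incl_y, polar_y_mul, hu, hne]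

lemma proj_polar_last (u : KoszulAlgebra k (n + 1)) :
    proj (polar (Fin.last n) (Fin.last n) u) = 0 := by
  simp [polar_apply, proj_x_last, proj_y_last_left]

section InclProj

/-- The elements on which `incl ∘ proj` is the identity. -/
def fixedByInclProj : Submodule k (KoszulAlgebra k (n + 1)) :=
  LinearMap.eqLocus (incl.comp proj).toLinearMap LinearMap.id

lemma mem_fixedByInclProj {u : KoszulAlgebra k (n + 1)} :
    u ∈ fixedByInclProj ↔ incl (proj u) = u := Iff.rfl

lemma iSup_weightSpace_inf_fixedByInclProj :
    ⨆ μ : Fin (n + 1) → ℕ, ((weightSpace fun i => (μ i : ℤ)) ⊓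
      ⨅ _ : μ (Fin.last n) = 0, fixedByInclProj : Submodule k (KoszulAlgebra k (n + 1))) = ⊤ := by
  refine iSup_eq_top_of_graded ?_ ?_ ?_
  · simpa [mem_fixedByInclProj] using! one_mem_weightSpace
  · rintro i μ u ⟨hwt, hfix⟩
    rw [natCast_add_single]
    refine ⟨x_mul_mem_weightSpace i hwt, ?_⟩
    simp only [SetLike.mem_coe, Submodule.mem_iInf, mem_fixedByInclProj] at hfix ⊢
    intro hzero
    induction i using Fin.lastCases with
    | last => simp at hzero
    | cast i => simp_all [proj_x_castSucc, incl_x, (Fin.castSucc_ne_last _).symm]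
  · rintro i j μ u ⟨hwt, hfix⟩
    rw [natCast_add_single, natCast_add_single]
    refine ⟨y_mul_mem_weightSpace i j hwt, ?_⟩
    simp only [SetLike.mem_coe, Submodule.mem_iInf, mem_fixedByInclProj] at hfix ⊢
    intro hzero
    induction i using Fin.lastCases with
    | last => simp at hzero
    | cast i =>
      induction j using Fin.lastCases with
      | last => simp at hzero
      | cast j => simp_all [proj_y_castSucc, incl_y, (Fin.castSucc_ne_last _).symm]

lemma sub_incl_proj_mem_iSup_eigenspace [CharZero k] (u : KoszulAlgebra k (n + 1)) :
    u - incl (proj u) ∈ ⨆ a : k, ⨆ _ : a ≠ 0,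
      Module.End.eigenspace (polar (Fin.last n) (Fin.last n)) a := by
  set W : Submodule k (KoszulAlgebra k (n + 1)) := ⨆ a : k, ⨆ _ : a ≠ 0,
    Module.End.eigenspace (polar (Fin.last n) (Fin.last n)) a
  have hle : (⊤ : Submodule k (KoszulAlgebra k (n + 1))) ≤
      W.comap (LinearMap.id - (incl.comp proj).toLinearMap) := by
    rw [← iSup_weightSpace_inf_fixedByInclProj]
    refine iSup_le fun μ v ⟨hwt, hfix⟩ => ?_
    change v - incl (proj v) ∈ W
    by_cases hμ : μ (Fin.last n) = 0
    · simp only [hμ, iInf_pos, SetLike.mem_coe, mem_fixedByInclProj] at hfix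
      rw [hfix, sub_self]
      exact W.zero_mem
    · have heig : polar (Fin.last n) (Fin.last n) v = (μ (Fin.last n) : k) • v := by
        simpa using mem_weightSpace.1 hwt (Fin.last n)
      have hne : (μ (Fin.last n) : k) ≠ 0 := Nat.cast_ne_zero.2 hμ
      have hproj : proj v = 0 := by
        have hpolar := proj_polar_last v
        rw [heig, map_smul] at hpolar
        exact (smul_eq_zero.1 hpolar).resolve_left hne
      rw [hproj, map_zero, sub_zero]
      exact Submodule.mem_iSup_of_mem _ (Submodule.mem_iSup_of_mem hne
        (Module.End.mem_eigenspace_iff.2 heig))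
  exact hle Submodule.mem_top

lemma incl_proj_of_polar_last_eq_zero [CharZero k] {u : KoszulAlgebra k (n + 1)}
    (h : polar (Fin.last n) (Fin.last n) u = 0) : incl (proj u) = u := by
  have hzero : u - incl (proj u) ∈ Module.End.eigenspace
      (polar (Fin.last n) (Fin.last n) : Module.End k (KoszulAlgebra k (n + 1))) 0 := by
    rw [Module.End.mem_eigenspace_iff, map_sub, h, polar_last_incl, sub_zero, zero_smul]
  have hdisj := (Module.End.eigenspaces_iSupIndep
    (polar (Fin.last n) (Fin.last n) : Module.End k (KoszulAlgebra k (n + 1)))) 0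
  exact (sub_eq_zero.1 (Submodule.disjoint_def.1 hdisj _ hzero
    (sub_incl_proj_mem_iSup_eigenspace u))).symm

end InclProj

/-! ### The ideals generated by `x_i², y_ii` and by `x_i, y_ii` -/

/-- The two-sided ideal generated by `x_i²` and `y_ii`. -/
def squareIdeal (i : Fin n) : Submodule k (KoszulAlgebra k n) :=
  LinearMap.range (LinearMap.mulLeft k (x i * x i)) ⊔ LinearMap.range (LinearMap.mulLeft k (y i i))

/-- The two-sided ideal generated by `x_i` and `y_ii`. -/
def xIdeal (i : Fin n) : Submodule k (KoszulAlgebra k n) :=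
  LinearMap.range (LinearMap.mulLeft k (x i)) ⊔ LinearMap.range (LinearMap.mulLeft k (y i i))

section Ideals

variable {i : Fin n} {u : KoszulAlgebra k n}

lemma mem_squareIdeal : u ∈ squareIdeal i ↔ ∃ a b, x i * (x i * a) + y i i * b = u := by
  simp [squareIdeal, Submodule.mem_sup]

lemma mem_xIdeal : u ∈ xIdeal i ↔ ∃ a b, x i * a + y i i * b = u := by
  simp [xIdeal, Submodule.mem_sup]

lemma x_mul_x_mul_mem_squareIdeal (i : Fin n) (u : KoszulAlgebra k n) :
    x i * (x i * u) ∈ squareIdeal i := mem_squareIdeal.2 ⟨u, 0, by rw [mul_zero, add_zero]⟩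

lemma y_mul_mem_squareIdeal (i : Fin n) (u : KoszulAlgebra k n) : y i i * u ∈ squareIdeal i :=
  mem_squareIdeal.2 ⟨0, u, by rw [mul_zero, mul_zero, zero_add]⟩

lemma x_mul_mem_xIdeal (i : Fin n) (u : KoszulAlgebra k n) : x i * u ∈ xIdeal i :=
  mem_xIdeal.2 ⟨u, 0, by rw [mul_zero, add_zero]⟩

lemma squareIdeal_le_xIdeal : (squareIdeal i : Submodule k (KoszulAlgebra k n)) ≤ xIdeal i := by
  intro u hu
  obtain ⟨a, b, rfl⟩ := mem_squareIdeal.1 hu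
  exact mem_xIdeal.2 ⟨_, b, rfl⟩

lemma mul_mem_squareIdeal (v : KoszulAlgebra k n) (hu : u ∈ squareIdeal i) :
    v * u ∈ squareIdeal i := by
  induction v using induction_on with
  | one => simpa using hu
  | add v w hv hw => rw [add_mul]; exact add_mem hv hw
  | smul c v hv => rw [smul_mul_assoc]; exact Submodule.smul_mem _ _ hv
  | x_mul j v hv =>
    obtain ⟨a, b, h⟩ := mem_squareIdeal.1 hv
    rw [mul_assoc, ← h]
    exact mem_squareIdeal.2 ⟨x j * a, x j * b, by
      rw [mul_add, x_mul_x_mul j i, x_mul_x_mul j i, ← y_mul_x_mul]⟩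
  | y_mul j l v hv =>
    obtain ⟨a, b, h⟩ := mem_squareIdeal.1 hv
    rw [mul_assoc, ← h]
    exact mem_squareIdeal.2 ⟨y j l * a, -(y j l * b), by
      rw [mul_add, y_mul_x_mul, y_mul_x_mul, mul_neg, ← y_mul_y_mul]⟩

lemma polar_mem_xIdeal (j : Fin n) (hu : u ∈ xIdeal i) : polar j j u ∈ xIdeal i := by
  obtain ⟨a, b, rfl⟩ := mem_xIdeal.1 hu
  refine mem_xIdeal.2 ⟨(delta j i : k) • a + polar j j a,
    (delta j i + delta j i : k) • b + polar j j b, ?_⟩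
  rw [map_add, polar_x_mul, polar_y_mul, delta_smul_congr j i fun j => x j * a,
    delta_smul_congr j i fun j => y j i * b]
  simp only [mul_add, mul_smul_comm, add_smul]

lemma dy_mem_xIdeal {a b : Fin n} (hb : b ≠ i) (hu : u ∈ xIdeal i) : dy a b u ∈ xIdeal i := by
  obtain ⟨v, w, rfl⟩ := mem_xIdeal.1 hu
  refine mem_xIdeal.2 ⟨dy a b v, -dy a b w, ?_⟩
  simp [dy_x_mul, dy_y_mul, delta_of_ne hb]

section Contraction

variable [NeZero (2 : k)]

lemma half_dy_y_mul (i : Fin n) (u : KoszulAlgebra k n) :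
    (2⁻¹ : k) • dy i i (y i i * u) = u - y i i * (2⁻¹ : k) • dy i i u := by
  rw [dy_y_mul, delta_self, mul_one, add_smul, one_smul, smul_sub, half_smul_add_self,
    mul_smul_comm]

lemma dy_sub_y_mul_dy (i : Fin n) (u : KoszulAlgebra k n) :
    dy i i (u - y i i * (2⁻¹ : k) • dy i i u) = 0 := by
  rw [map_sub, mul_smul_comm, map_smul, half_dy_y_mul, dy_dy_self, smul_zero, mul_zero, sub_zero,
    sub_self]

/-- `a` and `b` can be chosen free of `y_ii`. -/
lemma exists_dy_eq_zero_of_mem_squareIdeal (hu : u ∈ squareIdeal i) :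
    ∃ a b, dy i i a = 0 ∧ dy i i b = 0 ∧ x i * (x i * a) + y i i * b = u := by
  obtain ⟨a, b, rfl⟩ := mem_squareIdeal.1 hu
  let b' := b + x i * (x i * (2⁻¹ : k) • dy i i a)
  refine ⟨a - y i i * (2⁻¹ : k) • dy i i a, b' - y i i * (2⁻¹ : k) • dy i i b',
    dy_sub_y_mul_dy i a, dy_sub_y_mul_dy i b', ?_⟩
  simp only [b', mul_sub, mul_add, y_mul_self_mul, y_mul_x_mul]
  abel

/-- `squareIdeal i` is the Koszul complex on the regular element `x_i²`, up to a shift. -/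
theorem mem_range_diff_of_mem_squareIdeal (hu : u ∈ squareIdeal i) (hdu : diff u = 0) :
    u ∈ LinearMap.range (diff (k := k) (n := n)) := by
  obtain ⟨a, b, ha, hb, rfl⟩ := exists_dy_eq_zero_of_mem_squareIdeal hu
  have hcontract : (2⁻¹ : k) • dy i i (x i * (x i * a) + y i i * b) = b := by
    rw [map_add, smul_add, half_dy_y_mul, dy_x_mul, dy_x_mul, ha, hb]
    simp
  have hdb : diff b = 0 := by
    rw [← hcontract, map_smul, diff_dy, hdu, map_zero, neg_zero, smul_zero]
  have hx : x i * (x i * (diff a + b)) = 0 := by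
    rw [← hdu, map_add, diff_x_mul, diff_x_mul, diff_y_mul, hdb, mul_zero, sub_zero, mul_add,
      mul_add]
  have hda : diff a = -b :=
    eq_neg_of_add_eq_zero_left (eq_zero_of_x_mul_eq_zero (eq_zero_of_x_mul_eq_zero hx))
  exact ⟨y i i * a, by rw [diff_y_mul, hda, mul_neg, sub_neg_eq_add]⟩

lemma mem_of_mem_sup_squareIdeal {Q : Submodule k (KoszulAlgebra k n)}
    (hrange : LinearMap.range diff ≤ Q) (hker : Q ≤ LinearMap.ker diff) (hdu : diff u = 0)
    (hu : u ∈ Q ⊔ squareIdeal i) : u ∈ Q := by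
  obtain ⟨v, hv, w, hw, rfl⟩ := Submodule.mem_sup.1 hu
  have hdw : diff w = 0 := by rwa [map_add, LinearMap.mem_ker.1 (hker hv), zero_add] at hdu
  exact add_mem hv (hrange (mem_range_diff_of_mem_squareIdeal hw hdw))

end Contraction

end Ideals

lemma proj_eq_zero_of_mem_xIdeal {u : KoszulAlgebra k (n + 1)} (hu : u ∈ xIdeal (Fin.last n)) :
    proj u = 0 := by
  obtain ⟨a, b, rfl⟩ := mem_xIdeal.1 hu
  simp [proj_x_last, proj_y_last]

/-! ### Taylor expansion in the last variable -/

/-- The product of the generators `y_{j, last}` over the entries `j` of a list. -/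
def lastYProd (L : List (Fin n)) : KoszulAlgebra k (n + 1) :=
  (L.map fun j => y j.castSucc (Fin.last n)).prod

/-- The successive contractions against `y_{last, j}` over the entries `j` of a list. -/
def lastContract : List (Fin n) → KoszulAlgebra k (n + 1) →ₗ[k] KoszulAlgebra k (n + 1)
  | [] => LinearMap.id
  | j :: L => lastContract L ∘ₗ dy (Fin.last n) j.castSucc

section Taylor

lemma lastYProd_nil : (lastYProd ([] : List (Fin n)) : KoszulAlgebra k (n + 1)) = 1 := rfl

lemma lastYProd_cons (j : Fin n) (L : List (Fin n)) :
    (lastYProd (j :: L) : KoszulAlgebra k (n + 1)) = y j.castSucc (Fin.last n) * lastYProd L := by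
  simp [lastYProd]

lemma lastContract_nil (u : KoszulAlgebra k (n + 1)) : lastContract [] u = u := rfl

lemma lastContract_cons (j : Fin n) (L : List (Fin n)) (u : KoszulAlgebra k (n + 1)) :
    lastContract (j :: L) u = lastContract L (dy (Fin.last n) j.castSucc u) := rfl

lemma y_mul_lastYProd_of_mem {j : Fin n} {L : List (Fin n)} (h : j ∈ L) :
    y j.castSucc (Fin.last n) * lastYProd L = (0 : KoszulAlgebra k (n + 1)) := by
  induction L with
  | nil => simp at h
  | cons i L ih =>
    rw [lastYProd_cons]
    rcases List.mem_cons.1 h with rfl | h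
    · rw [y_mul_self_mul]
    · rw [y_mul_y_mul, ih h, mul_zero, neg_zero]

lemma lastYProd_eq_zero_of_not_nodup {L : List (Fin n)} (h : ¬ L.Nodup) :
    (lastYProd L : KoszulAlgebra k (n + 1)) = 0 := by
  induction L with
  | nil => simp at h
  | cons i L ih =>
    rw [lastYProd_cons]
    by_cases hi : i ∈ L
    · exact y_mul_lastYProd_of_mem hi
    · rw [ih fun hL => h (List.nodup_cons.2 ⟨hi, hL⟩), mul_zero]

lemma lastContract_dy_of_mem {j : Fin n} {L : List (Fin n)} (h : j ∈ L)
    (u : KoszulAlgebra k (n + 1)) : lastContract L (dy (Fin.last n) j.castSucc u) = 0 := by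
  induction L generalizing u with
  | nil => simp at h
  | cons i L ih =>
    rw [lastContract_cons]
    rcases List.mem_cons.1 h with rfl | h
    · rw [dy_dy_self, map_zero]
    · rw [dy_dy, map_neg, ih h, neg_zero]

lemma lastContract_eq_zero_of_not_nodup {L : List (Fin n)} (h : ¬ L.Nodup)
    (u : KoszulAlgebra k (n + 1)) : lastContract L u = 0 := by
  induction L generalizing u with
  | nil => simp at h
  | cons i L ih =>
    rw [lastContract_cons]
    by_cases hi : i ∈ L
    · exact lastContract_dy_of_mem hi u
    · exact ih (fun hL => h (List.nodup_cons.2 ⟨hi, hL⟩)) _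

lemma lastContract_x_mul (L : List (Fin n)) (i : Fin (n + 1)) (u : KoszulAlgebra k (n + 1)) :
    lastContract L (x i * u) = x i * lastContract L u := by
  induction L generalizing u with
  | nil => rfl
  | cons j L ih => rw [lastContract_cons, dy_x_mul, ih, lastContract_cons]

lemma lastContract_mem_xIdeal (L : List (Fin n)) {u : KoszulAlgebra k (n + 1)}
    (hu : u ∈ xIdeal (Fin.last n)) : lastContract L u ∈ xIdeal (Fin.last n) := by
  induction L generalizing u with
  | nil => exact hu
  | cons j _ ih => exact ih (dy_mem_xIdeal (Fin.castSucc_ne_last j) hu)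

lemma polar_last_apply (u : KoszulAlgebra k (n + 1)) :
    polar (Fin.last n) (Fin.last n) u = x (Fin.last n) * dx (Fin.last n) u +
      (∑ j : Fin n, y j.castSucc (Fin.last n) * dy (Fin.last n) j.castSucc u +
        y (Fin.last n) (Fin.last n) * dy (Fin.last n) (Fin.last n) u) := by
  rw [polar_apply, Fin.sum_univ_castSucc]
  simp only [y_symm (Fin.last n)]

/-- Modulo `x_last²` and `y_{last, last}`, an element of degree `m` in the last variable is the sum
of its Taylor terms `∏ y_{j, last} · v` and `x_last · ∏ y_{j, last} · v`, with `v` free of the last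
variable. Euler's formula for `polar last last` drives the induction on `m`. -/
theorem mem_of_taylor_terms_mem [CharZero k] {m : ℕ} {c : KoszulAlgebra k (n + 1)}
    {R : Submodule k (KoszulAlgebra k (n + 1))}
    (hc : polar (Fin.last n) (Fin.last n) c = (m : k) • c) (hR : squareIdeal (Fin.last n) ≤ R)
    (hy : ∀ L : List (Fin n), L.length = m → lastYProd L * incl (proj (lastContract L c)) ∈ R)
    (hx : ∀ L : List (Fin n), L.length + 1 = m → x (Fin.last n) *
      (lastYProd L * incl (proj (lastContract L (dx (Fin.last n) c)))) ∈ R) : c ∈ R := by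
  induction m generalizing c R with
  | zero =>
    rw [Nat.cast_zero, zero_smul] at hc
    simpa only [lastYProd_nil, lastContract_nil, one_mul, incl_proj_of_polar_last_eq_zero hc]
      using hy [] rfl
  | succ m ih =>
    have hcomap : ∀ a, squareIdeal (Fin.last n) ≤ R.comap (LinearMap.mulLeft k a) :=
      fun a u hu => hR (mul_mem_squareIdeal a hu)
    have hm : ((m + 1 : ℕ) : k) ≠ 0 := Nat.cast_ne_zero.2 m.succ_ne_zero
    rw [← Submodule.smul_mem_iff R hm, ← hc, polar_last_apply]
    refine add_mem ?_ (add_mem (Submodule.sum_mem _ fun j _ => ?_)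
      (hR (y_mul_mem_squareIdeal _ _)))
    · refine ih (R := R.comap (LinearMap.mulLeft k (x (Fin.last n)))) ?_ (hcomap _)
        (fun L hL => hx L (by rw [hL])) fun _ _ => hR (x_mul_x_mul_mem_squareIdeal _ _)
      rw [polar_dx, hc, delta_self, map_smul, Nat.cast_succ]
      module
    · refine ih (R := R.comap (LinearMap.mulLeft k (y j.castSucc (Fin.last n)))) ?_ (hcomap _)
        (fun L hL => ?_) fun L hL => ?_
      · rw [polar_dy, hc, delta_self, delta_of_ne (Fin.castSucc_ne_last j), map_smul,
          Nat.cast_succ]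
        module
      · rw [Submodule.mem_comap, LinearMap.mulLeft_apply, ← mul_assoc, ← lastYProd_cons,
          ← lastContract_cons]
        exact hy (j :: L) (by rw [List.length_cons, hL])
      · rw [Submodule.mem_comap, LinearMap.mulLeft_apply, y_mul_x_mul, ← mul_assoc (y _ _),
          ← lastYProd_cons, ← dy_dx, ← lastContract_cons]
        exact hx (j :: L) (by rw [List.length_cons, hL])

lemma diff_lastContract [NeZero (2 : k)] (L : List (Fin n)) (u : KoszulAlgebra k (n + 1)) :
    diff (lastContract L u) = (-1 : k) ^ L.length • lastContract L (diff u) := by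
  induction L generalizing u with
  | nil => simp [lastContract_nil]
  | cons j L ih =>
    rw [lastContract_cons, ih, diff_dy, lastContract_cons, map_neg, List.length_cons, pow_succ]
    module

lemma exists_diff_lastYProd_mul [NeZero (2 : k)] (L : List (Fin n)) (v : KoszulAlgebra k (n + 1)) :
    ∃ r, diff (lastYProd L * v) =
      (-1 : k) ^ L.length • (lastYProd L * diff v) + x (Fin.last n) * r := by
  induction L with
  | nil => exact ⟨0, by simp [lastYProd_nil]⟩
  | cons j L ih =>
    obtain ⟨r, hr⟩ := ih
    refine ⟨x j.castSucc * (lastYProd L * v) - y j.castSucc (Fin.last n) * r, ?_⟩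
    rw [lastYProd_cons, mul_assoc, diff_y_mul, hr, mul_sub, mul_add, mul_smul_comm, y_mul_x_mul,
      x_mul_x_mul, mul_assoc, List.length_cons, pow_succ]
    module

lemma exists_lastYProd_mul_diff [NeZero (2 : k)] (L : List (Fin n)) (v : KoszulAlgebra k (n + 1)) :
    ∃ w r, lastYProd L * diff v = diff w + x (Fin.last n) * r := by
  obtain ⟨r, hr⟩ := exists_diff_lastYProd_mul L v
  refine ⟨(-1 : k) ^ L.length • (lastYProd L * v), -(-1 : k) ^ L.length • r, ?_⟩
  rw [map_smul, hr, smul_add, smul_smul, ← mul_pow, mul_smul_comm]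
  simp

lemma diff_proj_lastContract [NeZero (2 : k)] {c : KoszulAlgebra k (n + 1)} (hc : diff c = 0)
    (L : List (Fin n)) : diff (proj (lastContract L c)) = 0 := by
  rw [proj, ← substMap_diff, diff_lastContract, hc, map_zero, smul_zero, map_zero]

lemma diff_proj_lastContract_dx [NeZero (2 : k)] {c : KoszulAlgebra k (n + 1)} (hc : diff c = 0)
    {L : List (Fin n)} (hL : ∀ j, proj (lastContract (j :: L) c) = 0) :
    diff (proj (lastContract L (dx (Fin.last n) c))) = 0 := by
  have hdx : diff (dx (Fin.last n) c) = -∑ j, x j * dy (Fin.last n) j c :=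
    eq_neg_of_add_eq_zero_left (by rw [← dx_diff, hc, map_zero])
  have hterm : proj (lastContract L (∑ j, x j * dy (Fin.last n) j c)) = 0 := by
    simp only [Fin.sum_univ_castSucc, map_add, map_sum, lastContract_x_mul, ← lastContract_cons,
      map_mul, hL, proj_x_last, mul_zero, zero_mul, Finset.sum_const_zero, add_zero]
  have hproj : diff (proj (lastContract L (dx (Fin.last n) c))) =
      proj (diff (lastContract L (dx (Fin.last n) c))) := (substMap_diff _ _).symm
  rw [hproj, diff_lastContract, hdx, map_neg, map_smul, map_neg, hterm, neg_zero, smul_zero]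

/-- The weight left to the other variables by a Taylor term with factor `lastYProd L`. -/
def residualWeight (l : Fin (n + 1) → ℤ) (L : List (Fin n)) : Fin n → ℤ :=
  fun i => l i.castSucc - L.count i

lemma proj_lastContract_mem_weightSpace (L : List (Fin n)) {l : Fin (n + 1) → ℤ}
    {u : KoszulAlgebra k (n + 1)} (hu : u ∈ weightSpace l) :
    proj (lastContract L u) ∈ weightSpace (residualWeight l L) := by
  induction L generalizing u l with
  | nil =>
    refine mem_weightSpace.2 fun i => ?_
    rw [polar_proj, lastContract_nil, mem_weightSpace.1 hu, map_smul]
    simp [residualWeight]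
  | cons j L ih =>
    rw [lastContract_cons]
    convert ih (dy_mem_weightSpace (Fin.last n) j.castSucc hu) using 2
    ext i
    simp only [residualWeight, Pi.sub_apply, Pi.single_apply, Fin.castSucc_ne_last, if_false,
      Fin.castSucc_inj, List.count_cons, beq_iff_eq, eq_comm (a := j)]
    split_ifs <;> push_cast <;> ring

lemma proj_lastContract_dx_mem_weightSpace (L : List (Fin n)) {l : Fin (n + 1) → ℤ}
    {u : KoszulAlgebra k (n + 1)} (hu : u ∈ weightSpace l) :
    proj (lastContract L (dx (Fin.last n) u)) ∈ weightSpace (residualWeight l L) := by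
  have hweight : residualWeight (l - Pi.single (Fin.last n) 1) L = residualWeight l L := by
    ext i
    simp [residualWeight, Fin.castSucc_ne_last]
  exact hweight ▸ proj_lastContract_mem_weightSpace L (dx_mem_weightSpace (Fin.last n) hu)

section BadWeights

variable {l : Fin (n + 1) → ℤ} {m : ℕ} {c : KoszulAlgebra k (n + 1)}

lemma mem_range_diff_of_not_isBadWeight {l : Fin n → ℤ} {v : KoszulAlgebra k n}
    (hbad : ¬ IsBadWeight (LinearMap.range (diff (k := k))) l) (hv : v ∈ weightSpace l)
    (hdv : diff v = 0) : ∃ w, diff w = v := by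
  by_contra hrange
  exact hbad ⟨v, hv, hdv, hrange⟩

lemma polar_last_of_mem_weightSpace (hl : l (Fin.last n) = m) (hc : c ∈ weightSpace l) :
    polar (Fin.last n) (Fin.last n) c = (m : k) • c := by
  rw [mem_weightSpace.1 hc, hl, Int.cast_natCast]

lemma lastYProd_mul_incl_diff_mem [NeZero (2 : k)] (L : List (Fin n)) (w : KoszulAlgebra k n) :
    lastYProd L * incl (diff w) ∈ LinearMap.range diff ⊔ xIdeal (Fin.last n) := by
  obtain ⟨w', r, h⟩ := exists_lastYProd_mul_diff L (incl w)
  rw [incl, substMap_diff, ← incl, h]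
  exact Submodule.add_mem_sup ⟨w', rfl⟩ (x_mul_mem_xIdeal _ r)

lemma x_mul_lastYProd_mul_incl_diff_mem [NeZero (2 : k)] (L : List (Fin n))
    (w : KoszulAlgebra k n) : x (Fin.last n) * (lastYProd L * incl (diff w)) ∈
      LinearMap.range diff ⊔ squareIdeal (Fin.last n) := by
  obtain ⟨w', r, h⟩ := exists_lastYProd_mul_diff L (incl w)
  rw [incl, substMap_diff, ← incl, h, mul_add, ← diff_x_mul]
  exact Submodule.add_mem_sup ⟨_, rfl⟩ (x_mul_x_mul_mem_squareIdeal _ r)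

variable [CharZero k]

lemma mem_range_diff_sup_xIdeal (hl : l (Fin.last n) = m) (hc : c ∈ weightSpace l)
    (hdc : diff c = 0) (hbad : ∀ L : List (Fin n), L.Nodup → L.length = m →
      ¬ IsBadWeight (LinearMap.range (diff (k := k))) (residualWeight l L)) :
    c ∈ LinearMap.range diff ⊔ xIdeal (Fin.last n) := by
  refine mem_of_taylor_terms_mem (polar_last_of_mem_weightSpace hl hc)
    (squareIdeal_le_xIdeal.trans le_sup_right) (fun L hL => ?_)
    fun L _ => Submodule.mem_sup_right (x_mul_mem_xIdeal _ _)
  by_cases hnodup : L.Nodup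
  · obtain ⟨w, hw⟩ := mem_range_diff_of_not_isBadWeight (hbad L hnodup hL)
      (proj_lastContract_mem_weightSpace L hc) (diff_proj_lastContract hdc L)
    rw [← hw]
    exact lastYProd_mul_incl_diff_mem L w
  · rw [lastYProd_eq_zero_of_not_nodup hnodup, zero_mul]
    exact zero_mem _

lemma mem_range_diff_of_mem_xIdeal (hl : l (Fin.last n) = m) (hc : c ∈ weightSpace l)
    (hdc : diff c = 0) (hx : c ∈ xIdeal (Fin.last n))
    (hbad : ∀ L : List (Fin n), L.Nodup → L.length + 1 = m →
      ¬ IsBadWeight (LinearMap.range (diff (k := k))) (residualWeight l L)) :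
    c ∈ LinearMap.range diff := by
  have hproj : ∀ L, proj (lastContract L c) = 0 := fun L =>
    proj_eq_zero_of_mem_xIdeal (lastContract_mem_xIdeal L hx)
  have hsup : c ∈ LinearMap.range diff ⊔ squareIdeal (Fin.last n) := by
    refine mem_of_taylor_terms_mem (polar_last_of_mem_weightSpace hl hc) le_sup_right
      (fun L _ => ?_) fun L hL => ?_
    · rw [hproj, map_zero, mul_zero]
      exact zero_mem _
    by_cases hnodup : L.Nodup
    · obtain ⟨w, hw⟩ := mem_range_diff_of_not_isBadWeight (hbad L hnodup hL)
        (proj_lastContract_dx_mem_weightSpace L hc)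
        (diff_proj_lastContract_dx hdc fun j => hproj (j :: L))
      rw [← hw]
      exact x_mul_lastYProd_mul_incl_diff_mem L w
    · rw [lastYProd_eq_zero_of_not_nodup hnodup, zero_mul, mul_zero]
      exact zero_mem _
  exact mem_of_mem_sup_squareIdeal le_rfl (LinearMap.range_le_ker_iff.2 <| LinearMap.ext diff_diff)
    hdc hsup

theorem IsBadWeight.exists_residualWeight
    (h : IsBadWeight (LinearMap.range (diff (k := k))) l) (hl : l (Fin.last n) = m) :
    ∃ L : List (Fin n), L.Nodup ∧ (L.length = m ∨ L.length + 1 = m) ∧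
      IsBadWeight (LinearMap.range (diff (k := k))) (residualWeight l L) := by
  obtain ⟨c, hc, hdc, hrange⟩ := h
  by_contra! hbad
  obtain ⟨_, ⟨w, rfl⟩, v, hv, hwv⟩ := Submodule.mem_sup.1 <|
    mem_range_diff_sup_xIdeal hl hc hdc fun L hL hlen => hbad L hL (Or.inl hlen)
  obtain ⟨w', hw', hx⟩ := exists_mem_weightSpace_sub_diff_mem (fun i _ => polar_mem_xIdeal i) hc
    (show c - diff w ∈ xIdeal (Fin.last n) by rwa [← hwv, add_sub_cancel_left])
  have hsub : c - diff w' ∈ LinearMap.range diff :=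
    mem_range_diff_of_mem_xIdeal hl (sub_mem hc (diff_mem_weightSpace hw'))
      (by rw [map_sub, hdc, diff_diff, sub_zero]) hx
      fun L hL hlen => hbad L hL (Or.inr hlen)
  exact hrange ((Submodule.sub_mem_iff_left _ (LinearMap.mem_range_self diff w')).1 hsub)

end BadWeights

end Taylor

section CasimirBound

lemma card_mul_card_sub_one_le_two_mul_sum (T : Finset (Fin n)) :
    (T.card : ℤ) * (T.card - 1) ≤ 2 * ∑ i ∈ T, ((i : ℕ) : ℤ) := by
  have hinj : Function.Injective fun i : Fin n => ((i : ℕ) : ℤ) :=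
    Nat.cast_injective.comp Fin.val_injective
  have hle := Finset.sum_range_le_sum (s := T.map ⟨_, hinj⟩) (c := 0) (by simp)
  have hgauss : (∑ j ∈ Finset.range T.card, (j : ℤ)) * 2 = T.card * (T.card - 1) := by
    have := Finset.sum_range_id_mul_two T.card
    rcases T.card.eq_zero_or_pos with hT | hT
    · simp [hT]
    · zify [hT] at this
      exact this
  simp only [Finset.card_map, Finset.sum_map, zero_add] at hle
  rw [← hgauss, mul_comm]
  exact mul_le_mul_of_nonneg_left hle two_pos.le

lemma casimirValue_eq_residualWeight {l : Fin (n + 1) → ℤ} {L : List (Fin n)} (hL : L.Nodup) :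
    casimirValue l = casimirValue (residualWeight l L) +
      ∑ i ∈ L.toFinset, 2 * (l i.castSucc - 1 - (i : ℕ)) +
        l (Fin.last n) * (l (Fin.last n) - 2 * n - 1) := by
  rw [casimirValue, Fin.sum_univ_castSucc, casimirValue, ← Finset.univ_inter L.toFinset,
    ← Finset.sum_ite_mem, ← Finset.sum_add_distrib, Fin.val_last]
  congr 1
  refine Finset.sum_congr rfl fun i _ => ?_
  simp only [residualWeight, hL.count, List.mem_toFinset, Fin.val_castSucc]
  split_ifs <;> push_cast <;> ring

theorem IsBadWeight.casimirValue_neg [CharZero k] {l : Fin (n + 1) → ℤ}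
    (h : IsBadWeight (LinearMap.range (diff (k := k))) l) (hpos : 0 < l (Fin.last n))
    (hle : ∀ i, l i ≤ n) : casimirValue l < 0 := by
  obtain ⟨m, hm⟩ := Int.eq_ofNat_of_zero_le hpos.le
  obtain ⟨L, hL, hlen, hbad⟩ := h.exists_residualWeight hm
  obtain ⟨m', -, hres, hzero⟩ :=
    hbad.exists_casimirValue_eq_zero isGLStable_range_diff fun u => ⟨u, rfl⟩
  have hsum : ∑ i ∈ L.toFinset, 2 * (l i.castSucc - 1 - (i : ℕ)) ≤
      2 * L.length * ((n : ℤ) - 1) - L.length * (L.length - 1) := calc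
    _ ≤ ∑ i ∈ L.toFinset, 2 * ((n : ℤ) - 1 - (i : ℕ)) :=
      Finset.sum_le_sum fun i _ => by linarith [hle i.castSucc]
    _ = 2 * L.length * ((n : ℤ) - 1) - 2 * ∑ i ∈ L.toFinset, ((i : ℕ) : ℤ) := by
      rw [← Finset.mul_sum, Finset.sum_sub_distrib, Finset.sum_const,
        List.toFinset_card_of_nodup hL, nsmul_eq_mul]
      ring
    _ ≤ _ := by
      have := card_mul_card_sub_one_le_two_mul_sum L.toFinset
      rw [List.toFinset_card_of_nodup hL] at this
      linarith
  have hmn : (m : ℤ) ≤ n := hm ▸ hle (Fin.last n)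
  rw [casimirValue_eq_residualWeight hL, hm]
  rw [hm] at hpos
  rcases hlen with hlen | hlen
  · rw [hlen] at hsum
    linarith
  · have hlen : (L.length : ℤ) = m - 1 := by omega
    rw [hlen] at hsum
    linarith

end CasimirBound

/-! ### The cycles `Z_i` and their products -/

section Wedge

lemma diff_tmul_one (f : S k n) : diff (tmul f 1) = 0 := by
  simp [diff_apply, dy_tmul]

lemma coe_q (i j : Fin n) : ((q i j : S2 k n) : S k n) = X i * X j := rfl

lemma diff_tmul_ι_mul [NeZero (2 : k)] (f : S k n) (m : S2 k n) (w : ExteriorAlgebra k (S2 k n)) :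
    diff (tmul f (ExteriorAlgebra.ι k m * w)) =
      tmul (f * (m : S k n)) w - tmul 1 (ExteriorAlgebra.ι k m) * diff (tmul f w) := by
  have hm : m ∈ Submodule.span k (Set.range fun p : Fin n × Fin n => (q p.1 p.2 : S2 k n)) :=
    span_range_q (k := k) (n := n) ▸ Submodule.mem_top
  induction hm using Submodule.span_induction with
  | mem m hm =>
    obtain ⟨⟨i, j⟩, rfl⟩ := hm
    have hy : tmul f (ExteriorAlgebra.ι k (q i j) * w) = y i j * tmul f w := by
      rw [y, tmul_mul_tmul, one_mul]
    have hx : tmul (f * ((q i j : S2 k n) : S k n)) w = x i * (x j * tmul f w) := by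
      rw [x, x, tmul_mul_tmul, tmul_mul_tmul, one_mul, one_mul, coe_q, mul_comm f, mul_assoc]
    rw [hy, hx, diff_y_mul, y]
  | zero => simp
  | add a b _ _ ha hb =>
    simp only [map_add, add_mul, mul_add, Submodule.coe_add, LinearMap.add_apply, ha, hb]
    abel
  | smul c a _ ha =>
    simp only [map_smul, smul_mul_assoc, mul_smul_comm, Submodule.coe_smul, LinearMap.smul_apply,
      ha, smul_sub]

theorem diff_tmul_ιMulti [NeZero (2 : k)] {t : ℕ} (f : S k n) (m : Fin (t + 1) → S2 k n) :
    diff (tmul f (ExteriorAlgebra.ιMulti k (t + 1) m)) = ∑ j : Fin (t + 1), (-1 : ℤ) ^ (j : ℕ) •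
      tmul (f * (m j : S k n)) (ExteriorAlgebra.ιMulti k t fun l => m (j.succAbove l)) := by
  induction t generalizing f with
  | zero =>
    rw [ExteriorAlgebra.ιMulti_succ_apply, diff_tmul_ι_mul]
    simp [diff_tmul_one]
  | succ t ih =>
    rw [ExteriorAlgebra.ιMulti_succ_apply, diff_tmul_ι_mul, ih, sub_eq_add_neg, Finset.mul_sum,
      ← Finset.sum_neg_distrib, Fin.sum_univ_succ (n := t + 1)]
    congr 1
    · simp [Matrix.vecTail, Function.comp_def]
    · refine Finset.sum_congr rfl fun j _ => ?_
      rw [ExteriorAlgebra.ιMulti_succ_apply, mul_smul_comm, tmul_mul_tmul, one_mul, Fin.val_succ,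
        pow_succ, mul_neg_one, neg_smul]
      simp [Matrix.vecTail, Function.comp_def]

lemma tmul_ιMulti_q (f : S k n) {t : ℕ} (a b : Fin t → Fin n) :
    tmul f (ExteriorAlgebra.ιMulti k t fun l => q (a l) (b l)) =
      tmul f 1 * (List.ofFn fun l => (y (a l) (b l) : KoszulAlgebra k n)).prod := by
  induction t generalizing f with
  | zero => simp
  | succ t ih =>
    have htail := ih 1 (fun l => a l.succ) fun l => b l.succ
    rw [tmul_one_one, one_mul] at htail
    rw [ExteriorAlgebra.ιMulti_succ_apply, List.ofFn_succ, List.prod_cons, ← htail, y,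
      tmul_mul_tmul, tmul_mul_tmul, one_mul, one_mul, mul_one]
    rfl

end Wedge

/-- The element `Zel i`, viewed in the Koszul algebra. -/
def Z (i : Fin n) : KoszulAlgebra k n := (Zel i : KK k n)

section Z

lemma Z_eq_sum_tmul (i : Fin n) : (Z i : KoszulAlgebra k n) =
    ∑ j : Fin ((i : ℕ) + 1), (-1 : ℤ) ^ (j : ℕ) • tmul (X (Fin.castLE i.isLt j))
      (ExteriorAlgebra.ιMulti k (i : ℕ) fun l => q (Fin.castLE i.isLt (j.succAbove l)) i) := rfl

lemma Z_eq_sum (i : Fin n) : (Z i : KoszulAlgebra k n) =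
    ∑ j : Fin ((i : ℕ) + 1), (-1 : ℤ) ^ (j : ℕ) • (x (Fin.castLE i.isLt j) *
      (List.ofFn fun l : Fin (i : ℕ) =>
        (y (Fin.castLE i.isLt (j.succAbove l)) i : KoszulAlgebra k n)).prod) := by
  simp only [Z_eq_sum_tmul, tmul_ιMulti_q, x]

lemma x_mul_Z [NeZero (2 : k)] (i : Fin n) : x i * Z i = diff (tmul (1 : S k n)
    (ExteriorAlgebra.ιMulti k ((i : ℕ) + 1) fun l => q (Fin.castLE i.isLt l) i)) := by
  rw [diff_tmul_ιMulti, Z_eq_sum_tmul, Finset.mul_sum]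
  refine Finset.sum_congr rfl fun j _ => ?_
  rw [mul_smul_comm, x, tmul_mul_tmul, one_mul, one_mul, coe_q, mul_comm (X i)]

lemma diff_Z [NeZero (2 : k)] (i : Fin n) : diff (Z i : KoszulAlgebra k n) = 0 :=
  eq_zero_of_x_mul_eq_zero (i := i) (by rw [← diff_x_mul, x_mul_Z, diff_diff])

lemma incl_Z (i : Fin n) : incl (Z i : KoszulAlgebra k n) = Z i.castSucc := by
  simp only [Z_eq_sum, map_sum, map_zsmul, map_mul, incl_x, map_list_prod, List.map_ofFn,
    Function.comp_def, incl_y]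
  rfl

lemma list_prod_mem_squareIdeal {i : Fin n} {L : List (KoszulAlgebra k n)} (h : y i i ∈ L) :
    L.prod ∈ squareIdeal i := by
  induction L with
  | nil => simp at h
  | cons v L ih =>
    rw [List.prod_cons]
    rcases List.mem_cons.1 h with rfl | h
    · exact y_mul_mem_squareIdeal i _
    · exact mul_mem_squareIdeal v (ih h)

lemma Z_last_sub_mem_squareIdeal : (Z (Fin.last n) : KoszulAlgebra k (n + 1)) -
    (-1 : k) ^ n • (x (Fin.last n) * lastYProd (List.finRange n)) ∈
      squareIdeal (Fin.last n) := by
  have hsum : (Z (Fin.last n) : KoszulAlgebra k (n + 1)) =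
      ∑ j : Fin (n + 1), (-1 : k) ^ (j : ℕ) • (x j *
        (List.ofFn fun l => (y (j.succAbove l) (Fin.last n) : KoszulAlgebra k (n + 1))).prod) := by
    rw [Z_eq_sum]
    exact Finset.sum_congr rfl fun j _ => by rw [← Int.cast_smul_eq_zsmul k]; push_cast; rfl
  rw [hsum, Fin.sum_univ_castSucc, lastYProd, ← List.ofFn_eq_map]
  simp only [Fin.succAbove_last, Fin.val_last, add_sub_cancel_right]
  refine Submodule.sum_mem _ fun j _ => Submodule.smul_mem _ _ (mul_mem_squareIdeal _
    (list_prod_mem_squareIdeal (List.mem_ofFn.2 ?_)))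
  obtain ⟨l, hl⟩ := Fin.exists_succAbove_eq (Fin.castSucc_ne_last j).symm
  exact ⟨l, by rw [hl]⟩

end Z

section Leibniz

lemma mul_x_comm (i : Fin n) (u : KoszulAlgebra k n) : u * x i = x i * u := by
  induction u using induction_on with
  | one => simp
  | add u v hu hv => rw [add_mul, mul_add, hu, hv]
  | smul c u hu => rw [smul_mul_assoc, mul_smul_comm, hu]
  | x_mul j u hu => rw [mul_assoc, hu, x_mul_x_mul]
  | y_mul a b u hu => rw [mul_assoc, hu, y_mul_x_mul]

lemma exists_diff_mul [NeZero (2 : k)] (u : KoszulAlgebra k n) :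
    ∃ u', ∀ v, diff (u * v) = diff u * v + u' * diff v := by
  induction u using induction_on with
  | one => exact ⟨1, fun v => by simp [diff_one]⟩
  | add u₁ u₂ h₁ h₂ =>
    obtain ⟨a, ha⟩ := h₁
    obtain ⟨b, hb⟩ := h₂
    exact ⟨a + b, fun v => by rw [add_mul, map_add, ha, hb, map_add, add_mul, add_mul]; abel⟩
  | smul c u h =>
    obtain ⟨a, ha⟩ := h
    exact ⟨c • a, fun v => by simp only [smul_mul_assoc, map_smul, ha, smul_add]⟩
  | x_mul i u h =>
    obtain ⟨a, ha⟩ := h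
    exact ⟨x i * a, fun v => by simp only [diff_x_mul, ha, mul_add, mul_assoc]⟩
  | y_mul i j u h =>
    obtain ⟨a, ha⟩ := h
    refine ⟨-(y i j * a), fun v => ?_⟩
    simp only [diff_y_mul, ha, mul_add, sub_mul, mul_assoc, neg_mul]
    abel

lemma diff_mul_eq_zero [NeZero (2 : k)] {u v : KoszulAlgebra k n} (hu : diff u = 0)
    (hv : diff v = 0) : diff (u * v) = 0 := by
  obtain ⟨u', h⟩ := exists_diff_mul u
  rw [h, hu, hv, zero_mul, mul_zero, add_zero]

/-- `v` commutes with every `y_ij` up to the scalar `e`. -/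
def CommutesWithY (e : k) (v : KoszulAlgebra k n) : Prop :=
  ∀ i j, y i j * v = e • (v * y i j)

lemma commutesWithY_one : CommutesWithY (1 : k) (1 : KoszulAlgebra k n) := fun i j => by simp

lemma CommutesWithY.mul {e f : k} {v w : KoszulAlgebra k n} (hv : CommutesWithY e v)
    (hw : CommutesWithY f w) : CommutesWithY (e * f) (v * w) := fun i j => by
  rw [← mul_assoc, hv, smul_mul_assoc, mul_assoc, hw, mul_smul_comm, smul_smul, mul_assoc]

lemma commutesWithY_prod_y {t : ℕ} (a b : Fin t → Fin n) :
    CommutesWithY ((-1 : k) ^ t) (List.ofFn fun l => (y (a l) (b l) : KoszulAlgebra k n)).prod := by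
  induction t with
  | zero => simpa using commutesWithY_one
  | succ t ih =>
    rw [List.ofFn_succ, List.prod_cons, pow_succ']
    exact CommutesWithY.mul (fun i j => by rw [y_mul_y, neg_one_smul]) (ih _ _)

lemma commutesWithY_Z (i : Fin n) : CommutesWithY ((-1 : k) ^ (i : ℕ)) (Z i) := fun a b => by
  rw [Z_eq_sum, Finset.mul_sum, Finset.sum_mul, Finset.smul_sum]
  refine Finset.sum_congr rfl fun j _ => ?_
  rw [mul_smul_comm, y_mul_x_mul, commutesWithY_prod_y, mul_smul_comm, smul_mul_assoc, mul_assoc,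
    smul_comm]

lemma CommutesWithY.exists_lastYProd_mul {e : k} {v : KoszulAlgebra k (n + 1)}
    (hv : CommutesWithY e v) (L : List (Fin n)) :
    ∃ f : k, lastYProd L * v = f • (v * lastYProd L) := by
  induction L with
  | nil => exact ⟨1, by simp [lastYProd_nil]⟩
  | cons j L ih =>
    obtain ⟨f, hf⟩ := ih
    refine ⟨f * e, ?_⟩
    rw [lastYProd_cons, mul_assoc, hf, mul_smul_comm, ← mul_assoc, hv, smul_mul_assoc, smul_smul,
      mul_assoc]

end Leibniz

/-- The product of the cycles `Z_i` over the entries `i` of a list. -/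
def zProd (L : List (Fin n)) : KoszulAlgebra k n := (L.map Z).prod

section ZProd

lemma diff_zProd [NeZero (2 : k)] (L : List (Fin n)) : diff (zProd L : KoszulAlgebra k n) = 0 := by
  induction L with
  | nil => exact diff_one
  | cons i L ih => exact diff_mul_eq_zero (diff_Z i) ih

lemma exists_commutesWithY_zProd (L : List (Fin n)) :
    ∃ e : k, CommutesWithY e (zProd L : KoszulAlgebra k n) := by
  induction L with
  | nil => exact ⟨1, commutesWithY_one⟩
  | cons i L ih =>
    obtain ⟨e, he⟩ := ih
    exact ⟨_, (commutesWithY_Z i).mul he⟩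

lemma incl_zProd (L : List (Fin n)) :
    incl (zProd L : KoszulAlgebra k n) = zProd (L.map Fin.castSucc) := by
  simp only [zProd, map_list_prod, List.map_map, Function.comp_def, incl_Z]

lemma zProd_append_singleton (L : List (Fin n)) (i : Fin n) :
    (zProd (L ++ [i]) : KoszulAlgebra k n) = zProd L * Z i := by
  simp [zProd]

end ZProd

/-! ### Adding a variable to a linear substitution -/

section ExtendLast

/-- The block matrix `diag(A, 1)`, acting on the first `n` variables by `A` and fixing the last. -/
def extendLast : Matrix (Fin n) (Fin n) k →* Matrix (Fin (n + 1)) (Fin (n + 1)) k where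
  toFun A := Matrix.of (Fin.snoc (fun a => Fin.snoc (A a) 0) (Pi.single (Fin.last n) 1))
  map_one' := by
    ext a b
    induction a using Fin.lastCases <;> induction b using Fin.lastCases <;>
      simp [Matrix.one_apply, Fin.castSucc_ne_last, (Fin.castSucc_ne_last _).symm]
  map_mul' A B := by
    ext a b
    rw [Matrix.mul_apply, Fin.sum_univ_castSucc]
    induction a using Fin.lastCases <;> induction b using Fin.lastCases <;>
      simp [Matrix.mul_apply, Fin.castSucc_ne_last]

variable (A : Matrix (Fin n) (Fin n) k)

@[simp] lemma extendLast_castSucc_castSucc (a b : Fin n) :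
    extendLast A a.castSucc b.castSucc = A a b := by
  simp [extendLast]

@[simp] lemma extendLast_castSucc_last (a : Fin n) :
    extendLast A a.castSucc (Fin.last n) = 0 := by
  simp [extendLast]

@[simp] lemma extendLast_last_castSucc (b : Fin n) :
    extendLast A (Fin.last n) b.castSucc = 0 := by
  simp [extendLast]

@[simp] lemma extendLast_last_last : extendLast A (Fin.last n) (Fin.last n) = 1 := by
  simp [extendLast]

lemma incl_substMap (u : KoszulAlgebra k n) :
    incl (substMap A u) = substMap (extendLast A) (incl u) := by
  rw [incl, substMap_substMap, substMap_substMap]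
  refine congrArg (substMap · u) (Matrix.ext fun a b => ?_)
  rw [Matrix.mul_apply, Matrix.mul_apply]
  induction b using Fin.lastCases <;>
    simp [delta, Fin.castSucc_ne_last]

lemma substMap_extendLast_x_last :
    substMap (extendLast A) (x (Fin.last n)) = (x (Fin.last n) : KoszulAlgebra k (n + 1)) := by
  simp [substMap_x, Fin.sum_univ_castSucc]

lemma substMap_extendLast_y_last_last : substMap (extendLast A) (y (Fin.last n) (Fin.last n)) =
    (y (Fin.last n) (Fin.last n) : KoszulAlgebra k (n + 1)) := by
  simp [substMap_y, Fin.sum_univ_castSucc]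

lemma substMap_extendLast_mem_squareIdeal {u : KoszulAlgebra k (n + 1)}
    (hu : u ∈ squareIdeal (Fin.last n)) :
    substMap (extendLast A) u ∈ squareIdeal (Fin.last n) := by
  obtain ⟨a, b, rfl⟩ := mem_squareIdeal.1 hu
  exact mem_squareIdeal.2 ⟨substMap (extendLast A) a, substMap (extendLast A) b, by
    simp only [map_add, map_mul, substMap_extendLast_x_last, substMap_extendLast_y_last_last]⟩

lemma alternatingMap_sum_smul {R M N ι : Type*} [CommRing R] [AddCommGroup M] [Module R M]
    [AddCommGroup N] [Module R N] [Fintype ι] [DecidableEq ι] (F : M [⋀^ι]→ₗ[R] N)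
    (A : Matrix ι ι R) (v : ι → M) : F (fun i => ∑ j, A i j • v j) = A.det • F v := by
  let G := F.compLinearMap (Fintype.linearCombination R v)
  have hG : G = (LinearMap.toSpanSingleton R N (F v)).compAlternatingMap
      (Pi.basisFun R ι).det := by
    refine Module.Basis.ext_alternating (Pi.basisFun R ι) fun i hi => ?_
    let σ : Equiv.Perm ι := Equiv.ofBijective i (Finite.injective_iff_bijective.1 hi)
    change G (Pi.basisFun R ι ∘ σ) =
      (LinearMap.toSpanSingleton R N (F v)).compAlternatingMap (Pi.basisFun R ι).det
        (Pi.basisFun R ι ∘ σ)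
    rw [AlternatingMap.map_perm, AlternatingMap.map_perm, LinearMap.compAlternatingMap_apply,
      Module.Basis.det_self]
    simp [G]
  calc F (fun i => ∑ j, A i j • v j) = G (fun i j => A i j) := rfl
    _ = A.det • F v := by
      rw [hG, LinearMap.compAlternatingMap_apply, Pi.basisFun_det_apply]
      rfl

lemma lastYProd_finRange : (lastYProd (List.finRange n) : KoszulAlgebra k (n + 1)) =
    tmul 1 (ExteriorAlgebra.ιMulti k n fun i => q i.castSucc (Fin.last n)) := by
  rw [tmul_ιMulti_q, tmul_one_one, one_mul, lastYProd, ← List.ofFn_eq_map]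

lemma substMap_extendLast_lastYProd_finRange :
    substMap (extendLast A) (lastYProd (List.finRange n)) =
      A.det • (lastYProd (List.finRange n) : KoszulAlgebra k (n + 1)) := by
  have hq (i : Fin n) : substQuad (extendLast A) (q i.castSucc (Fin.last n)) =
      ∑ a, A i a • q a.castSucc (Fin.last n) := by
    simp [substQuad_q, Fin.sum_univ_castSucc]
  rw [lastYProd_finRange, substMap_tmul, map_one, ExteriorAlgebra.map_apply_ιMulti,
    Function.comp_def, funext hq, alternatingMap_sum_smul, map_smul]

lemma exists_lastYProd_eq_smul_of_perm {L L' : List (Fin n)} (h : L.Perm L') :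
    ∃ e : k, (lastYProd L : KoszulAlgebra k (n + 1)) = e • lastYProd L' := by
  induction h with
  | nil => exact ⟨1, (one_smul _ _).symm⟩
  | cons j _ ih =>
    obtain ⟨e, he⟩ := ih
    exact ⟨e, by rw [lastYProd_cons, he, lastYProd_cons, mul_smul_comm]⟩
  | swap i j L => exact ⟨-1, by simp only [lastYProd_cons]; rw [y_mul_y_mul, neg_one_smul]⟩
  | trans _ _ h₁ h₂ =>
    obtain ⟨e, he⟩ := h₁
    obtain ⟨f, hf⟩ := h₂
    exact ⟨e * f, by rw [he, hf, smul_smul]⟩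

end ExtendLast

/-! ### The cycles generated by the squarefree monomials -/

variable (k n) in
/-- The span of the `GL_n`-translates of the squarefree monomials `Z_{μ_1} ⋯ Z_{μ_s}`,
`μ_1 < ⋯ < μ_s`. -/
def squarefreeZSpan : Submodule k (KoszulAlgebra k n) :=
  Submodule.span k {v | ∃ (g : GL (Fin n) k) (L : List (Fin n)), L.Pairwise (· < ·) ∧
    v = substMap (g : Matrix (Fin n) (Fin n) k) (zProd L)}

variable (k n) in
/-- The cycles homologous to an element of `squarefreeZSpan`. -/
def generatedCycles : Submodule k (KoszulAlgebra k n) :=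
  LinearMap.range diff ⊔ squarefreeZSpan k n

section GeneratedCycles

lemma IsBadWeight.mono {Q R : Submodule k (KoszulAlgebra k n)} {l : Fin n → ℤ}
    (h : IsBadWeight R l) (hQR : Q ≤ R) : IsBadWeight Q l :=
  let ⟨c, hc, hdc, hcR⟩ := h
  ⟨c, hc, hdc, fun hcQ => hcR (hQR hcQ)⟩

lemma map_mem_of_mem_squarefreeZSpan {V : Type*} [AddCommGroup V] [Module k V]
    {f : KoszulAlgebra k n →ₗ[k] V} {P : Submodule k V}
    (h : ∀ (g : GL (Fin n) k) (L : List (Fin n)), L.Pairwise (· < ·) →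
      f (substMap (g : Matrix (Fin n) (Fin n) k) (zProd L)) ∈ P)
    {u : KoszulAlgebra k n} (hu : u ∈ squarefreeZSpan k n) : f u ∈ P := by
  refine (Submodule.map_span_le f _ P).2 ?_ (Submodule.mem_map_of_mem hu)
  rintro _ ⟨g, L, hL, rfl⟩
  exact h g L hL

lemma substMap_zProd_mem_squarefreeZSpan (g : GL (Fin n) k) {L : List (Fin n)}
    (hL : L.Pairwise (· < ·)) :
    substMap (g : Matrix (Fin n) (Fin n) k) (zProd L) ∈ squarefreeZSpan k n :=
  Submodule.subset_span ⟨g, L, hL, rfl⟩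

lemma substMap_extendLast_zProd_mem_squarefreeZSpan (g : GL (Fin n) k) {L : List (Fin (n + 1))}
    (hL : L.Pairwise (· < ·)) :
    substMap (extendLast g.val) (zProd L) ∈ squarefreeZSpan k (n + 1) := by
  rw [← Units.coe_map]
  exact substMap_zProd_mem_squarefreeZSpan _ hL

lemma isGLStable_squarefreeZSpan : IsGLStable (squarefreeZSpan k n) := fun g _ =>
  map_mem_of_mem_squarefreeZSpan (f := (substMap g.val).toLinearMap) fun h L hL => by
    rw [AlgHom.toLinearMap_apply, substMap_substMap]
    exact substMap_zProd_mem_squarefreeZSpan (h * g) hL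

lemma isGLStable_generatedCycles [NeZero (2 : k)] : IsGLStable (generatedCycles k n) := by
  intro g u hu
  obtain ⟨v, hv, w, hw, rfl⟩ := Submodule.mem_sup.1 hu
  rw [map_add]
  exact Submodule.add_mem_sup (isGLStable_range_diff g v hv) (isGLStable_squarefreeZSpan g w hw)

lemma generatedCycles_le_ker_diff [NeZero (2 : k)] : generatedCycles k n ≤ LinearMap.ker diff := by
  refine sup_le (LinearMap.range_le_ker_iff.2 <| LinearMap.ext diff_diff)
    fun u hu => map_mem_of_mem_squarefreeZSpan (f := LinearMap.id) (fun g L _ => ?_) hu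
  rw [LinearMap.id_apply, LinearMap.mem_ker, ← substMap_diff, diff_zProd, map_zero]

lemma incl_mem_squarefreeZSpan {u : KoszulAlgebra k n} (hu : u ∈ squarefreeZSpan k n) :
    incl u ∈ squarefreeZSpan k (n + 1) := by
  refine map_mem_of_mem_squarefreeZSpan (f := incl.toLinearMap) (fun g L hL => ?_) hu
  rw [AlgHom.toLinearMap_apply, incl_substMap, incl_zProd]
  exact substMap_extendLast_zProd_mem_squarefreeZSpan g
    (List.pairwise_map.2 (hL.imp Fin.castSucc_lt_castSucc_iff.2))

lemma exists_x_mul_lastYProd_mul_incl_zProd_sub_mem (L : List (Fin n)) : ∃ e : k,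
    x (Fin.last n) * (lastYProd (List.finRange n) * incl (zProd L)) -
      e • (zProd (L.map Fin.castSucc ++ [Fin.last n]) : KoszulAlgebra k (n + 1)) ∈
        squareIdeal (Fin.last n) := by
  rw [incl_zProd, zProd_append_singleton]
  generalize hv : (zProd (L.map Fin.castSucc) : KoszulAlgebra k (n + 1)) = v
  obtain ⟨e, he⟩ : ∃ e : k, CommutesWithY e v := hv ▸ exists_commutesWithY_zProd _
  obtain ⟨f, hf⟩ := he.exists_lastYProd_mul (List.finRange n)
  have hmem := mul_mem_squareIdeal v (Z_last_sub_mem_squareIdeal (k := k) (n := n))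
  have hx : v * (x (Fin.last n) * lastYProd (List.finRange n)) =
      x (Fin.last n) * (v * lastYProd (List.finRange n)) := by
    rw [← mul_assoc, mul_x_comm, mul_assoc]
  rw [mul_sub, mul_smul_comm, hx] at hmem
  rw [hf, mul_smul_comm]
  have hsign : (-1 : k) ^ n * (-1) ^ n = 1 := by rw [← mul_pow]; simp
  refine ⟨f * (-1) ^ n, ?_⟩
  convert Submodule.smul_mem _ (-(f * (-1) ^ n)) hmem using 1
  rw [smul_sub, smul_smul, neg_mul, mul_assoc f, hsign, mul_one, neg_smul, neg_smul, sub_neg_eq_add,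
    neg_add_eq_sub]

lemma x_mul_lastYProd_mul_incl_mem {u : KoszulAlgebra k n} (hu : u ∈ squarefreeZSpan k n) :
    x (Fin.last n) * (lastYProd (List.finRange n) * incl u) ∈
      squarefreeZSpan k (n + 1) ⊔ squareIdeal (Fin.last n) := by
  refine map_mem_of_mem_squarefreeZSpan (f := LinearMap.mulLeft k (x (Fin.last n)) ∘ₗ
    LinearMap.mulLeft k (lastYProd (List.finRange n)) ∘ₗ incl.toLinearMap) (fun g L hL => ?_) hu
  simp only [LinearMap.comp_apply, LinearMap.mulLeft_apply, AlgHom.toLinearMap_apply]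
  have hdet : g.val.det ≠ 0 := ((Matrix.isUnit_iff_isUnit_det _).1 g.isUnit).ne_zero
  have htranslate :
      x (Fin.last n) * (lastYProd (List.finRange n) * incl (substMap g.val (zProd L))) =
        (g.val.det)⁻¹ • substMap (extendLast g.val)
          (x (Fin.last n) * (lastYProd (List.finRange n) * incl (zProd L))) := by
    rw [map_mul, map_mul, substMap_extendLast_x_last, substMap_extendLast_lastYProd_finRange,
      incl_substMap, smul_mul_assoc, mul_smul_comm, inv_smul_smul₀ hdet]
  have hsorted : (L.map Fin.castSucc ++ [Fin.last n]).Pairwise (· < ·) := by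
    simp [List.pairwise_append, List.pairwise_map, hL, Fin.castSucc_lt_last]
  obtain ⟨e, he⟩ := exists_x_mul_lastYProd_mul_incl_zProd_sub_mem (k := k) L
  have hsub := substMap_extendLast_mem_squareIdeal g.val he
  rw [map_sub, map_smul] at hsub
  rw [htranslate]
  refine Submodule.smul_mem _ _ ?_
  rw [← add_sub_cancel (e • substMap (extendLast g.val) (zProd _)) (substMap _ _)]
  exact Submodule.add_mem_sup (Submodule.smul_mem _ _
    (substMap_extendLast_zProd_mem_squarefreeZSpan g hsorted)) hsub

lemma perm_finRange_of_nodup {L : List (Fin n)} (hL : L.Nodup) (hlen : L.length = n) :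
    L.Perm (List.finRange n) := by
  refine List.perm_of_nodup_nodup_toFinset_eq hL (List.nodup_finRange n) ?_
  rw [Finset.eq_univ_of_card L.toFinset (by
    rw [List.toFinset_card_of_nodup hL, hlen, Fintype.card_fin])]
  ext
  simp

lemma x_mul_lastYProd_mul_incl_mem_of_mem_generatedCycles [NeZero (2 : k)] {L : List (Fin n)}
    (hL : n ≤ L.length) {u : KoszulAlgebra k n} (hu : u ∈ generatedCycles k n) :
    x (Fin.last n) * (lastYProd L * incl u) ∈
      generatedCycles k (n + 1) ⊔ squareIdeal (Fin.last n) := by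
  by_cases hnodup : L.Nodup
  · obtain ⟨_, ⟨w, rfl⟩, v, hv, rfl⟩ := Submodule.mem_sup.1 hu
    have hlen : L.length = n := le_antisymm (by simpa using hnodup.length_le_card) hL
    obtain ⟨e, he⟩ := exists_lastYProd_eq_smul_of_perm (k := k) (perm_finRange_of_nodup hnodup hlen)
    rw [map_add, mul_add, mul_add]
    refine add_mem (sup_le_sup_right (le_sup_left : _ ≤ generatedCycles k (n + 1)) _
      (x_mul_lastYProd_mul_incl_diff_mem L w)) ?_
    rw [he, smul_mul_assoc, mul_smul_comm]
    exact Submodule.smul_mem _ _ (sup_le_sup_right (le_sup_right : _ ≤ generatedCycles k (n + 1))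
      _ (x_mul_lastYProd_mul_incl_mem hv))
  · rw [lastYProd_eq_zero_of_not_nodup hnodup, zero_mul, mul_zero]
    exact zero_mem _

lemma not_nodup_of_lt_length {L : List (Fin n)} (hL : n < L.length) : ¬ L.Nodup := fun h =>
  hL.not_ge (by simpa using h.length_le_card)

lemma not_isBadWeight_of_lt_last [CharZero k]
    (ih : LinearMap.ker diff ≤ generatedCycles k n) {l : Fin (n + 1) → ℤ}
    (hl : (n : ℤ) < l (Fin.last n)) : ¬ IsBadWeight (generatedCycles k (n + 1)) l := by
  rintro ⟨c, hc, hdc, hcQ⟩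
  obtain ⟨m, hm⟩ := Int.eq_ofNat_of_zero_le (n.cast_nonneg.trans hl.le)
  have hnm : n < m := by omega
  refine hcQ (mem_of_mem_sup_squareIdeal le_sup_left generatedCycles_le_ker_diff hdc
    (mem_of_taylor_terms_mem (polar_last_of_mem_weightSpace hm hc) le_sup_right
      (fun L hL => ?_) fun L hL => ?_))
  · rw [lastYProd_eq_zero_of_not_nodup (not_nodup_of_lt_length (hL ▸ hnm)), zero_mul]
    exact zero_mem _
  · refine x_mul_lastYProd_mul_incl_mem_of_mem_generatedCycles (by omega)
      (ih (diff_proj_lastContract_dx hdc fun j => ?_))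
    rw [lastContract_eq_zero_of_not_nodup (not_nodup_of_lt_length (by simp; omega)), map_zero]

lemma not_isBadWeight_of_last_eq_zero [CharZero k]
    (ih : LinearMap.ker diff ≤ generatedCycles k n) {l : Fin (n + 1) → ℤ}
    (hl : l (Fin.last n) = 0) : ¬ IsBadWeight (generatedCycles k (n + 1)) l := by
  rintro ⟨c, hc, hdc, hcQ⟩
  have hproj : proj c ∈ generatedCycles k n :=
    ih (LinearMap.mem_ker.2 (by rw [proj, ← substMap_diff, hdc, map_zero]))
  have hincl : incl (proj c) = c :=
    incl_proj_of_polar_last_eq_zero (by rw [mem_weightSpace.1 hc, hl, Int.cast_zero, zero_smul])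
  obtain ⟨_, ⟨w, rfl⟩, u, hu, hsum⟩ := Submodule.mem_sup.1 hproj
  refine hcQ ?_
  rw [← hincl, ← hsum, map_add]
  exact Submodule.add_mem_sup ⟨incl w, (substMap_diff _ w).symm⟩ (incl_mem_squarefreeZSpan hu)

theorem ker_diff_le_generatedCycles [CharZero k] (n : ℕ) :
    LinearMap.ker diff ≤ generatedCycles k n := by
  induction n with
  | zero =>
    refine le_sup_of_le_right fun c hc => ?_
    clear hc
    induction c using induction_on with
    | one => exact Submodule.subset_span ⟨1, [], List.Pairwise.nil, by simp [zProd]⟩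
    | add u v hu hv => exact add_mem hu hv
    | smul a u hu => exact Submodule.smul_mem _ _ hu
    | x_mul i => exact i.elim0
    | y_mul i => exact i.elim0
  | succ n ih =>
    intro c hc
    by_contra hcQ
    obtain ⟨l₀, hl₀⟩ := exists_isBadWeight hc hcQ
    obtain ⟨l, hl, -, hcasimir⟩ :=
      hl₀.exists_casimirValue_eq_zero isGLStable_generatedCycles fun u =>
        Submodule.mem_sup_left ⟨u, rfl⟩
    have hle : ∀ i, l i ≤ n := fun i => le_of_not_gt fun hi =>
      not_isBadWeight_of_lt_last ih (by simpa using hi)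
        (hl.comp_perm isGLStable_generatedCycles (Equiv.swap i (Fin.last n)))
    have hpos : 0 < l (Fin.last n) := (hl.nonneg _).lt_of_ne fun h0 =>
      not_isBadWeight_of_last_eq_zero ih h0.symm hl
    exact ((hl.mono le_sup_left).casimirValue_neg hpos hle).ne hcasimir

end GeneratedCycles

/-! ### Homological degree -/

variable (k n) in
/-- The homological degree `t` part `S ⊗ ⋀^t S_2` of the Koszul algebra. -/
def degreePart (t : ℕ) : Submodule k (KoszulAlgebra k n) := Kt k n t

/-- The projection onto `degreePart k n t` along the other homological degrees. -/
def degreeProj (t : ℕ) : KoszulAlgebra k n →ₗ[k] KoszulAlgebra k n :=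
  (LinearMap.lTensor (S k n) (GradedAlgebra.proj (fun i : ℕ => ⋀[k]^i (S2 k n)) t) :
    KK k n →ₗ[k] KK k n)

section Degree

lemma ιMulti_mem_exteriorPower {t : ℕ} (m : Fin t → S2 k n) :
    ExteriorAlgebra.ιMulti k t m ∈ ⋀[k]^t (S2 k n) :=
  ExteriorAlgebra.ιMulti_range k t ⟨m, rfl⟩

lemma degreePart_eq_map₂ (t : ℕ) :
    degreePart k n t = Submodule.map₂ tmul ⊤ (⋀[k]^t (S2 k n)) := by
  rw [degreePart, Kt, TensorProduct.range_map_eq_span_tmul, Submodule.map₂_eq_span_image2]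
  congr 1
  ext v
  exact ⟨fun ⟨f, w, hv⟩ => ⟨f, Submodule.mem_top, w, w.2, hv⟩,
    fun ⟨f, _, w, hw, hv⟩ => ⟨f, ⟨w, hw⟩, hv⟩⟩

lemma degreePart_eq_span (t : ℕ) : degreePart k n t = Submodule.span k
    {v | ∃ (f : S k n) (m : Fin t → S2 k n), tmul f (ExteriorAlgebra.ιMulti k t m) = v} := by
  rw [degreePart_eq_map₂, ← ExteriorAlgebra.ιMulti_span_fixedDegree, ← Submodule.span_univ,
    Submodule.map₂_span_span]
  congr 1
  ext v
  simp [Set.mem_image2]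

lemma tmul_mem_degreePart (f : S k n) {t : ℕ} {w : ExteriorAlgebra k (S2 k n)}
    (hw : w ∈ ⋀[k]^t (S2 k n)) : tmul f w ∈ degreePart k n t := by
  rw [degreePart_eq_map₂]
  exact Submodule.apply_mem_map₂ _ Submodule.mem_top hw

lemma iSup_degreePart : ⨆ t, degreePart k n t = ⊤ := by
  simp only [degreePart_eq_map₂, ← Submodule.map₂_iSup_right]
  rw [(DirectSum.Decomposition.isInternal fun i : ℕ => ⋀[k]^i (S2 k n)).submodule_iSup_eq_top]
  exact TensorProduct.map₂_mk_top_top_eq_top k _ _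

lemma map_mem_of_mem_degreePart {V : Type*} [AddCommGroup V] [Module k V] {t : ℕ}
    {F : KoszulAlgebra k n →ₗ[k] V} {P : Submodule k V}
    (h : ∀ (f : S k n) (m : Fin t → S2 k n), F (tmul f (ExteriorAlgebra.ιMulti k t m)) ∈ P)
    {c : KoszulAlgebra k n} (hc : c ∈ degreePart k n t) : F c ∈ P := by
  rw [degreePart_eq_span] at hc
  refine (Submodule.map_span_le F _ P).2 ?_ (Submodule.mem_map_of_mem hc)
  rintro _ ⟨f, m, rfl⟩
  exact h f m

lemma map_eq_map_of_mem_degreePart {V : Type*} [AddCommGroup V] [Module k V] {t : ℕ}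
    {F G : KoszulAlgebra k n →ₗ[k] V}
    (h : ∀ (f : S k n) (m : Fin t → S2 k n),
      F (tmul f (ExteriorAlgebra.ιMulti k t m)) = G (tmul f (ExteriorAlgebra.ιMulti k t m)))
    {c : KoszulAlgebra k n} (hc : c ∈ degreePart k n t) : F c = G c := by
  have hzero : (F - G) c ∈ (⊥ : Submodule k V) := map_mem_of_mem_degreePart (fun f m => by
    rw [LinearMap.sub_apply, h, sub_self, Submodule.mem_bot]) hc
  exact sub_eq_zero.1 hzero

variable {s t : ℕ} {c d : KoszulAlgebra k n}

lemma mul_mem_degreePart (hc : c ∈ degreePart k n s) (hd : d ∈ degreePart k n t) :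
    c * d ∈ degreePart k n (s + t) :=
  map_mem_of_mem_degreePart (F := LinearMap.mulRight k d) (fun f m =>
    map_mem_of_mem_degreePart (F := LinearMap.mulLeft k _) (fun g p => by
      rw [LinearMap.mulLeft_apply, tmul_mul_tmul]
      exact tmul_mem_degreePart _ (SetLike.mul_mem_graded (A := fun i : ℕ => ⋀[k]^i (S2 k n))
        (ιMulti_mem_exteriorPower m) (ιMulti_mem_exteriorPower p))) hd) hc

lemma substMap_mem_degreePart {m : ℕ} (A : Matrix (Fin n) (Fin m) k) (hc : c ∈ degreePart k n t) :
    substMap A c ∈ degreePart k m t :=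
  map_mem_of_mem_degreePart (F := (substMap A).toLinearMap) (fun f p => by
    rw [AlgHom.toLinearMap_apply, substMap_tmul, ExteriorAlgebra.map_apply_ιMulti]
    exact tmul_mem_degreePart _ (ιMulti_mem_exteriorPower _)) hc

lemma Z_mem_degreePart (i : Fin n) : (Z i : KoszulAlgebra k n) ∈ degreePart k n i := by
  rw [Z_eq_sum_tmul]
  exact Submodule.sum_mem _ fun j _ =>
    zsmul_mem (tmul_mem_degreePart _ (ιMulti_mem_exteriorPower _)) _

lemma zProd_mem_degreePart (L : List (Fin n)) :
    (zProd L : KoszulAlgebra k n) ∈ degreePart k n (L.map Fin.val).sum := by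
  induction L with
  | nil => exact tmul_mem_degreePart (t := 0) 1 (by simp)
  | cons i L ih => exact mul_mem_degreePart (Z_mem_degreePart i) ih

lemma degreeProj_tmul (t : ℕ) (f : S k n) (w : ExteriorAlgebra k (S2 k n)) :
    degreeProj t (tmul f w) =
      tmul f (GradedAlgebra.proj (fun i : ℕ => ⋀[k]^i (S2 k n)) t w) := rfl

lemma degreeProj_of_mem (hc : c ∈ degreePart k n t) : degreeProj t c = c :=
  map_eq_map_of_mem_degreePart (G := LinearMap.id) (fun f m => by
    rw [degreeProj_tmul, GradedAlgebra.proj_apply, DirectSum.decompose_of_mem_same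
      (fun i : ℕ => ⋀[k]^i (S2 k n)) (ιMulti_mem_exteriorPower m), LinearMap.id_apply]) hc

lemma degreeProj_of_mem_of_ne (hst : s ≠ t) (hc : c ∈ degreePart k n s) : degreeProj t c = 0 :=
  map_eq_map_of_mem_degreePart (G := 0) (fun f m => by
    rw [degreeProj_tmul, GradedAlgebra.proj_apply, DirectSum.decompose_of_mem_ne
      (fun i : ℕ => ⋀[k]^i (S2 k n)) (ιMulti_mem_exteriorPower m) hst, map_zero,
      LinearMap.zero_apply]) hc

lemma degreeProj_mem_degreePart (t : ℕ) (c : KoszulAlgebra k n) :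
    degreeProj t c ∈ degreePart k n t := by
  refine Submodule.iSup_induction (degreePart k n) (motive := fun c => degreeProj t c ∈ _)
    (iSup_degreePart (k := k) (n := n) ▸ Submodule.mem_top : c ∈ _) (fun s c hc => ?_) ?_
    fun c d hc hd => ?_
  · rcases eq_or_ne s t with rfl | hst
    · rwa [degreeProj_of_mem hc]
    · rw [degreeProj_of_mem_of_ne hst hc]
      exact zero_mem _
  · rw [map_zero]
    exact zero_mem _
  · rw [map_add]
    exact add_mem hc hd

lemma diff_eq_zero_of_mem_degreePart_zero (hc : c ∈ degreePart k n 0) : diff c = 0 :=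
  map_eq_map_of_mem_degreePart (G := 0) (fun f m => by
    rw [ExteriorAlgebra.ιMulti_zero_apply, diff_tmul_one, LinearMap.zero_apply]) hc

lemma diff_mem_degreePart [NeZero (2 : k)] (hc : c ∈ degreePart k n (t + 1)) :
    diff c ∈ degreePart k n t :=
  map_mem_of_mem_degreePart (fun f m => by
    rw [diff_tmul_ιMulti]
    exact Submodule.sum_mem _ fun j _ =>
      zsmul_mem (tmul_mem_degreePart _ (ιMulti_mem_exteriorPower _)) _) hc

lemma diff_degreeProj_succ [NeZero (2 : k)] (t : ℕ) (c : KoszulAlgebra k n) :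
    diff (degreeProj (t + 1) c) = degreeProj t (diff c) := by
  refine Submodule.iSup_induction (degreePart k n)
    (motive := fun c => diff (degreeProj (t + 1) c) = degreeProj t (diff c))
    (iSup_degreePart (k := k) (n := n) ▸ Submodule.mem_top : c ∈ _) (fun s c hc => ?_)
    (by simp only [map_zero]) fun c d hc hd => by simp only [map_add, hc, hd]
  rcases s with _ | s
  · rw [degreeProj_of_mem_of_ne t.succ_ne_zero.symm hc, diff_eq_zero_of_mem_degreePart_zero hc,
      map_zero, map_zero]
  · rcases eq_or_ne s t with rfl | hst
    · rw [degreeProj_of_mem hc, degreeProj_of_mem (diff_mem_degreePart hc)]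
    · rw [degreeProj_of_mem_of_ne (by simpa using hst) hc,
        degreeProj_of_mem_of_ne hst (diff_mem_degreePart hc), map_zero]

lemma eq_diff_of_isKoszulDiff [NeZero (2 : k)] {D : ℕ → KK k n →ₗ[k] KK k n} (hD : IsKoszulDiff D)
    (hc : c ∈ degreePart k n t) : (D t (c : KK k n) : KoszulAlgebra k n) = diff c := by
  cases t with
  | zero => exact (LinearMap.congr_fun hD.1 c).trans (diff_eq_zero_of_mem_degreePart_zero hc).symm
  | succ t =>
    exact map_eq_map_of_mem_degreePart
      (F := (D (t + 1) : KoszulAlgebra k n →ₗ[k] KoszulAlgebra k n))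
      (fun f m => (hD.2 t f m).trans (diff_tmul_ιMulti f m).symm) hc

lemma substMap_zProd_eq_gact (g : GL (Fin n) k) (L : List (Fin n)) :
    substMap g.val (zProd L) =
      (gact g ((List.finRange L.length).map fun l => (Zel (L.get l) : KK k n)).prod :
        KoszulAlgebra k n) := by
  have hmap : (List.finRange L.length).map (fun l => (Zel (L.get l) : KK k n)) = L.map Zel := by
    rw [← Function.comp_def, ← List.map_map, List.map_get_finRange]
  rw [hmap]
  rfl

lemma degreeProj_mem_span_of_mem_squarefreeZSpan (t : ℕ) {u : KoszulAlgebra k n}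
    (hu : u ∈ squarefreeZSpan k n) :
    degreeProj t u ∈ Submodule.span k {v : KoszulAlgebra k n |
      ∃ (g : GL (Fin n) k) (s : ℕ) (μ : Fin s → Fin n), StrictMono μ ∧
        (∑ l, (μ l : ℕ)) = t ∧
        v = gact g (((List.finRange s).map (fun l => (Zel (μ l) : KK k n))).prod)} := by
  refine map_mem_of_mem_squarefreeZSpan (fun g L hL => ?_) hu
  have hmem := substMap_mem_degreePart g.val (zProd_mem_degreePart (k := k) L)
  by_cases hsum : (L.map Fin.val).sum = t
  · rw [degreeProj_of_mem (hsum ▸ hmem), substMap_zProd_eq_gact]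
    refine Submodule.subset_span ⟨g, L.length, L.get, hL.sortedLT.strictMono_get, ?_, rfl⟩
    rw [← hsum]
    exact Fin.sum_univ_fun_getElem L Fin.val
  · rw [degreeProj_of_mem_of_ne hsum hmem]
    exact zero_mem _

lemma exists_eq_degreeProj_add_diff_degreeProj [CharZero k] (hc : c ∈ degreePart k n t)
    (hdc : diff c = 0) :
    ∃ u ∈ squarefreeZSpan k n, ∃ w, c = degreeProj t u + diff (degreeProj (t + 1) w) := by
  obtain ⟨_, ⟨w, rfl⟩, u, hu, hcu⟩ := Submodule.mem_sup.1 (ker_diff_le_generatedCycles n hdc)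
  refine ⟨u, hu, w, ?_⟩
  rw [diff_degreeProj_succ, ← map_add, add_comm, hcu, degreeProj_of_mem hc]

end Degree

end KoszulAlgebra

/-- Every Koszul cycle `c ∈ ker(d_t)` can be written as
`c = u + d_{t+1}(w)` with `w ∈ K_{t+1}` and `u` a `k`-linear combination of elements
`g • (Z_{μ_1} ⋯ Z_{μ_s})` with `g ∈ GL_n(k)` and `0 ≤ μ_1 < ⋯ < μ_s ≤ n-1`,
`μ_1 + ⋯ + μ_s = t`; i.e. as a `k[GL_n(k)]`-module the Koszul homology `H_*(𝔪²)` is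
generated by the squarefree monomials in `Z_0, …, Z_{n-1}`. -/
theorem koszul_homology_generated_by_squarefree_Z (k : Type) [Field k] [CharZero k] (n : ℕ)
    (D : ℕ → KK k n →ₗ[k] KK k n) (hD : IsKoszulDiff D)
    (t : ℕ) (c : KK k n) (hc : c ∈ Kt k n t) (hcyc : D t c = 0) :
    ∃ u w : KK k n,
      u ∈ Submodule.span k {v : KK k n |
          ∃ (g : GL (Fin n) k) (s : ℕ) (μ : Fin s → Fin n), StrictMono μ ∧
            (∑ l, (μ l : ℕ)) = t ∧
            v = gact g (((List.finRange s).map (fun l => (Zel (μ l) : KK k n))).prod)} ∧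
      w ∈ Kt k n (t+1) ∧ c = u + D (t+1) w := by
  have hdc : KoszulAlgebra.diff c = 0 :=
    (KoszulAlgebra.eq_diff_of_isKoszulDiff hD hc).symm.trans hcyc
  obtain ⟨u, hu, w, hcuw⟩ := KoszulAlgebra.exists_eq_degreeProj_add_diff_degreeProj hc hdc
  have hw := KoszulAlgebra.degreeProj_mem_degreePart (t + 1) w
  refine ⟨KoszulAlgebra.degreeProj t u, KoszulAlgebra.degreeProj (t + 1) w,
    KoszulAlgebra.degreeProj_mem_span_of_mem_squarefreeZSpan t hu, hw, hcuw.trans ?_⟩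
  exact congrArg _ (KoszulAlgebra.eq_diff_of_isKoszulDiff hD hw).symm

end
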